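/- Let Θ'_{w_{q'},x_{q'},β}(h(t)), β ∈ ℕ^{n-1}, be the components of a reflection function associated with a C^∞ CR diffeomorphism h and a converging defining series z̄' = Σ_β (w̄')^β Θ'_{w_{q'},x_{q'},β}(t') for M', and assume that each component extends as a holomorphic function φ'_{w_{q'},x_{q'},β}(t) in a neighborhood of 0, so that the formal power series h_F(t) of h at 0 satisfies Θ'_{w_{q'},x_{q'},β}(h_F(t)) ≡ φ'_{w_{q'},x_{q'},β}(t) for all β. Then there exist constants C₀ > 0 and r₀ > 0 such that |φ'_{w_{q'},x_{q'},β}(t)| < C₀^{|β|+1} for all |t| < r₀ and all β ∈ ℕ^{n-1}. -/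

import Mathlib

/-!
Common definitions: CR geometry of real analytic hypersurfaces in `ℂⁿ`,
following J. Merker, "On envelopes of holomorphy of domains with Levi-flat
hats and the reflection principle".

We model `ℂⁿ` with `n = m + 1` as `CS m := (Fin m → ℂ) × ℂ`, with coordinates
`t = (w, z)`; the sup-norm balls of this product are polydiscs.
-/

noncomputable section

open Complex Topology Filter Metric Set

abbrev CS (m : ℕ) : Type := (Fin m → ℂ) × ℂ

section Basic

variable {E F : Type*} [NormedAddCommGroup E] [NormedSpace ℂ E]
  [NormedAddCommGroup F] [NormedSpace ℂ F]

/-- `v` is a real tangent vector to the set `M` at `q`: every real-differentiable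
function vanishing on `M` near `q` has differential annihilating `v`. -/
def TangentAt (M : Set E) (q v : E) : Prop :=
  ∀ ρ : E → ℝ, DifferentiableAt ℝ ρ q → (∀ᶠ z in 𝓝 q, z ∈ M → ρ z = 0) →
    fderiv ℝ ρ q v = 0

/-- `v` is a complex tangent vector to `M` at `q` (i.e. `v ∈ T^c_q M`). -/
def ComplexTangentAt (M : Set E) (q v : E) : Prop :=
  TangentAt M q v ∧ TangentAt M q (Complex.I • v)

/-- `M` is a real analytic real hypersurface: near each of its points it is the
zero set of a real analytic real-valued function with nonvanishing differential. -/
def IsRealAnalyticHypersurface (M : Set E) : Prop :=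
  M.Nonempty ∧ ∀ p ∈ M, ∃ (U : Set E) (ρ : E → ℝ), IsOpen U ∧ p ∈ U ∧
    AnalyticOnNhd ℝ ρ U ∧ fderiv ℝ ρ p ≠ 0 ∧ M ∩ U = {z ∈ U | ρ z = 0}

/-- A set `N ⊆ E` is generic in `E`: `T_q N + i T_q N = E` at each `q ∈ N`. -/
def IsGenericSet (N : Set E) : Prop :=
  ∀ q ∈ N, ∀ v : E, ∃ a b : E, TangentAt N q a ∧ TangentAt N q b ∧
    v = a + Complex.I • b

/-- The antiholomorphic part `∂̄f(q)(v)` of the real differential of `f` at `q`. -/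
def antiCDeriv (f : E → ℂ) (q v : E) : ℂ :=
  (fderiv ℝ f q v + Complex.I * fderiv ℝ f q (Complex.I • v)) / 2

/-- `f` is a CR function of class `C^k` on the hypersurface `M`: locally it has
`C^k` extensions whose antiholomorphic differential annihilates the complex
tangent spaces of `M`. -/
def IsCRFunctionOn (k : ℕ∞) (M : Set E) (f : E → ℂ) : Prop :=
  ∀ p ∈ M, ∃ (U : Set E) (g : E → ℂ), IsOpen U ∧ p ∈ U ∧
    ContDiffOn ℝ k g U ∧ (∀ z ∈ M ∩ U, g z = f z) ∧
    ∀ q ∈ M ∩ U, ∀ v : E, ComplexTangentAt M q v → antiCDeriv g q v = 0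

/-- `h` is a CR mapping of class `C^k` from `M` to `M'`. -/
def IsCRMapOn (k : ℕ∞) (M : Set E) (M' : Set F) (h : E → F) : Prop :=
  Set.MapsTo h M M' ∧ ∀ ℓ : F →L[ℂ] ℂ, IsCRFunctionOn k M fun z => ℓ (h z)

/-- `h` is a CR diffeomorphism of class `C^k` from `M` onto `M'`. -/
def IsCRDiffeoOn (k : ℕ∞) (M : Set E) (M' : Set F) (h : E → F) : Prop :=
  IsCRMapOn k M M' h ∧ Set.BijOn h M M' ∧
    ∃ g : F → E, IsCRMapOn k M' M g ∧ ∀ z ∈ M, g (h z) = z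

/-- `f` is a CR function of class `C^{1,α}` on `M`. -/
def IsCRFunctionC1HolderOn (α : NNReal) (M : Set E) (f : E → ℂ) : Prop :=
  ∀ p ∈ M, ∃ (U : Set E) (g : E → ℂ), IsOpen U ∧ p ∈ U ∧
    ContDiffOn ℝ 1 g U ∧
    (∃ C : NNReal, HolderOnWith C α (fderivWithin ℝ g U) U) ∧
    (∀ z ∈ M ∩ U, g z = f z) ∧
    ∀ q ∈ M ∩ U, ∀ v : E, ComplexTangentAt M q v → antiCDeriv g q v = 0

/-- `h` is a CR mapping of class `C^{1,α}` from `M` to `M'`. -/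
def IsCRMapC1HolderOn (α : NNReal) (M : Set E) (M' : Set F) (h : E → F) : Prop :=
  Set.MapsTo h M M' ∧ ∀ ℓ : F →L[ℂ] ℂ, IsCRFunctionC1HolderOn α M fun z => ℓ (h z)

/-- `h` is a CR diffeomorphism of class `C^{1,α}` from `M` onto `M'`. -/
def IsCRDiffeoC1HolderOn (α : NNReal) (M : Set E) (M' : Set F) (h : E → F) : Prop :=
  IsCRMapC1HolderOn α M M' h ∧ Set.BijOn h M M' ∧
    ∃ g : F → E, IsCRMapC1HolderOn α M' M g ∧ ∀ z ∈ M, g (h z) = z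

/-- There is a germ of a (possibly singular) complex hypersurface through `q`
contained in `M`. -/
def HasComplexHypersurfaceGermIn (M : Set E) (q : E) : Prop :=
  ∃ (U : Set E) (f : E → ℂ), IsOpen U ∧ q ∈ U ∧ DifferentiableOn ℂ f U ∧
    f q = 0 ∧ ¬ (∀ᶠ z in 𝓝 q, f z = 0) ∧ {z ∈ U | f z = 0} ⊆ M

/-- `M` is minimal in the sense of Tumanov at `q`: no germ of a complex
hypersurface through `q` is contained in `M`. -/
def MinimalAt (M : Set E) (q : E) : Prop := ¬ HasComplexHypersurfaceGermIn M q

/-- `M` is holomorphically nondegenerate: there is no holomorphic vector field,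
defined and not identically zero near some point of `M`, tangent to `M`. -/
def HolomorphicallyNondegenerate (M : Set E) : Prop :=
  ¬ ∃ (U : Set E) (X : E → E) (q : E), IsOpen U ∧ q ∈ M ∩ U ∧
      DifferentiableOn ℂ X U ∧ ¬ (∀ᶠ z in 𝓝 q, X z = 0) ∧
      ∀ z ∈ M ∩ U, ComplexTangentAt M z (X z)

/-- There exist `d` holomorphic vector fields tangent to `M`, defined near some
point of `M` and linearly independent at that (generic) point. -/
def HolDegDegreeGE (M : Set E) (d : ℕ) : Prop :=
  ∃ (U : Set E) (X : Fin d → E → E) (q : E), IsOpen U ∧ q ∈ M ∩ U ∧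
    (∀ i, DifferentiableOn ℂ (X i) U) ∧
    (∀ i, ∀ z ∈ M ∩ U, ComplexTangentAt M z (X i z)) ∧
    LinearIndependent ℂ fun i => X i q

/-- The holomorphic degeneracy degree of `M` equals `κ`. -/
def HolDegDegree (M : Set E) (κ : ℕ) : Prop :=
  HolDegDegreeGE M κ ∧ ¬ HolDegDegreeGE M (κ + 1)

/-- Near `b`, the set `A` is a complex submanifold of complex codimension `c`. -/
def IsComplexSubmanifoldAt (A : Set E) (b : E) (c : ℕ) : Prop :=
  ∃ (W : Set E) (f : E → Fin c → ℂ), IsOpen W ∧ b ∈ W ∧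
    DifferentiableOn ℂ f W ∧ A ∩ W = {z ∈ W | f z = 0} ∧
    Function.Surjective ⇑(fderiv ℂ f b)

/-- `A` is a closed complex analytic subset of the open set `Ω`. -/
def IsAnalyticSubsetOf (Ω A : Set E) : Prop :=
  A ⊆ Ω ∧ closure A ∩ Ω ⊆ A ∧
    ∀ a ∈ Ω, ∃ (W : Set E) (N : ℕ) (f : E → Fin N → ℂ), IsOpen W ∧ a ∈ W ∧
      W ⊆ Ω ∧ DifferentiableOn ℂ f W ∧ A ∩ W = {z ∈ W | f z = 0}

/-- `A` is a complex analytic subset of `Ω` of pure complex codimension `c`: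
its regular points are dense in it, and they all have codimension `c`. -/
def IsPureCodimAnalyticSubsetOf (Ω A : Set E) (c : ℕ) : Prop :=
  IsAnalyticSubsetOf Ω A ∧
  (∀ a ∈ A, ∀ V ∈ 𝓝 a, ∃ b ∈ A ∩ V, IsComplexSubmanifoldAt A b c) ∧
  (∀ b ∈ A, ∀ c' : ℕ, IsComplexSubmanifoldAt A b c' → c' = c)

/-- `S` is a `C^∞`-smooth real hypersurface of the open set `Ω`. -/
def IsSmoothHypersurfaceIn (Ω S : Set E) : Prop :=
  S ⊆ Ω ∧ ∀ q ∈ S, ∃ (U : Set E) (ρ : E → ℝ), IsOpen U ∧ q ∈ U ∧ U ⊆ Ω ∧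
    ContDiffOn ℝ (⊤ : ℕ∞) ρ U ∧ (∀ z ∈ U, fderiv ℝ ρ z ≠ 0) ∧
    S ∩ U = {z ∈ U | ρ z = 0}

/-- A smooth real hypersurface is Levi-flat iff it is foliated by complex
hypersurfaces, i.e. through each of its points there passes a germ of a
complex hypersurface contained in it. -/
def IsLeviFlat (S : Set E) : Prop :=
  ∀ q ∈ S, HasComplexHypersurfaceGermIn S q

/-- `f` is of class `C^{1,β}` on `s`. -/
def IsC1HolderOn {X Y : Type*} [NormedAddCommGroup X] [NormedSpace ℝ X]
    [NormedAddCommGroup Y] [NormedSpace ℝ Y] (β : NNReal) (f : X → Y)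
    (s : Set X) : Prop :=
  ContDiffOn ℝ 1 f s ∧ ∃ C : NNReal, HolderOnWith C β (fderivWithin ℝ f s) s

/-- A continuous CR function on a smooth hypersurface `S`: continuous on `S`
and locally a uniform limit on `S` of holomorphic functions
(Baouendi–Trèves characterization). -/
def ContinuousCRFunctionOn (S : Set E) (ψ : E → ℂ) : Prop :=
  ContinuousOn ψ S ∧ ∀ p ∈ S, ∃ U : Set E, IsOpen U ∧ p ∈ U ∧
    ∃ Fs : ℕ → E → ℂ, (∀ k, DifferentiableOn ℂ (Fs k) U) ∧
      TendstoUniformlyOn (fun k => Fs k) ψ atTop (S ∩ U)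

end Basic

section Series

variable {m : ℕ}

/-- Total degree of a multiindex `β ∈ ℕ^m`. -/
def mdeg (β : Fin m → ℕ) : ℕ := ∑ i, β i

/-- Monomial `w^β`. -/
def mpow (w : Fin m → ℂ) (β : Fin m → ℕ) : ℂ := ∏ i, w i ^ β i

/-- Componentwise conjugation of `w ∈ ℂ^m`. -/
def conjW (w : Fin m → ℂ) : Fin m → ℂ := fun i => starRingEnd ℂ (w i)

/-- Componentwise conjugation on `ℂ^{m+1}`. -/
def conjCS (t : CS m) : CS m := (conjW t.1, starRingEnd ℂ t.2)

/-- The series `Θ(ζ, t) = Σ_β ζ^β Θ_β(t)`. -/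
def ThetaSum (Θ : (Fin m → ℕ) → CS m → ℂ) (ζ : Fin m → ℂ) (t : CS m) : ℂ :=
  ∑' β : Fin m → ℕ, mpow ζ β * Θ β t

/-- The conjugate series `Θ̄(w, τ) = Σ_β w^β conj(Θ_β(τ̄))`. -/
def ThetaBar (Θ : (Fin m → ℕ) → CS m → ℂ) (w : Fin m → ℂ) (τ : CS m) : ℂ :=
  ∑' β : Fin m → ℕ, mpow w β * starRingEnd ℂ (Θ β (conjCS τ))

/-- Defining data for a hypersurface through `0`: a family of coefficient
functions `Θ_β`, a radius `r` and a constant `C`. -/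
structure DefData (m : ℕ) where
  Θ : (Fin m → ℕ) → CS m → ℂ
  r : ℝ
  C : ℝ

/-- `d` is a normally convergent complex defining series for `M` near the
origin, i.e. in suitable holomorphic coordinates vanishing at the reference
point, `M = {(w, z) : z̄ = Θ(w̄, (w, z)) = Σ_β w̄^β Θ_β(w, z)}`, where the
coefficients are holomorphic on the polydisc of radius `2r` and satisfy the
normal-convergence Cauchy estimates `|Θ_β| ≤ C / (2r)^{|β|}` there, and the
series vanishes at the origin. -/
def DefData.IsDefiningSeriesOf (d : DefData m) (M : Set (CS m)) : Prop :=
  0 < d.r ∧ 0 < d.C ∧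
  (∀ β, DifferentiableOn ℂ (d.Θ β) (ball (0 : CS m) (2 * d.r))) ∧
  (∀ β, ∀ t ∈ ball (0 : CS m) (2 * d.r), ‖d.Θ β t‖ ≤ d.C / (2 * d.r) ^ mdeg β) ∧
  d.Θ 0 0 = 0 ∧
  ∀ t ∈ ball (0 : CS m) d.r,
    (t ∈ M ↔ starRingEnd ℂ t.2 = ThetaSum d.Θ (conjW t.1) t)

/-- The Segre variety `S_{q̄}` of a point `q`, inside the polydisc of radius
`r`: `S_{q̄} = {(w, z) : z = Σ_β w^β conj(Θ_β(q))}`. -/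
def segreVariety (Θ : (Fin m → ℕ) → CS m → ℂ) (r : ℝ) (q : CS m) : Set (CS m) :=
  {t ∈ ball (0 : CS m) r |
    t.2 = ∑' β : Fin m → ℕ, mpow t.1 β * starRingEnd ℂ (Θ β q)}

/-- The reflection function `R'_h(t, ν̄') = μ̄' - Σ_β λ̄'^β Θ'_β(h(t))` extends
holomorphically to a neighborhood of `(p, p̄')` in `ℂⁿ × ℂⁿ`. -/
def ReflectionExtendsAt (Θ : (Fin m → ℕ) → CS m → ℂ) (h : CS m → CS m)
    (M : Set (CS m)) (p p' : CS m) : Prop :=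
  ∃ r > (0 : ℝ), ∃ R : CS m × CS m → ℂ,
    DifferentiableOn ℂ R (ball p r ×ˢ ball (conjCS p') r) ∧
    ∀ t ∈ M ∩ ball p r, ∀ ν ∈ ball (conjCS p') r,
      R (t, ν) = ν.2 - ∑' β : Fin m → ℕ, mpow ν.1 β * Θ β (h t)

/-- All the components `Θ_β ∘ h` of the reflection function extend
holomorphically to a common neighborhood of `q`, with uniform Cauchy
estimates `|Θ_β(h(t))| < C^{|β|+1}`; i.e. the reflection function is real
analytic at `q`. -/
def ReflectionAnalyticAt (Θ : (Fin m → ℕ) → CS m → ℂ) (h : CS m → CS m)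
    (M : Set (CS m)) (q : CS m) : Prop :=
  ∃ r C : ℝ, 0 < r ∧ 0 < C ∧ ∃ φ : (Fin m → ℕ) → CS m → ℂ,
    (∀ β, DifferentiableOn ℂ (φ β) (ball q r)) ∧
    (∀ β, ∀ t ∈ M ∩ ball q r, φ β t = Θ β (h t)) ∧
    ∀ β, ∀ t ∈ ball q r, ‖φ β t‖ < C ^ (mdeg β + 1)

end Series

section Jets

variable {m : ℕ}

/-- Partial derivative in the direction of the `i`-th `w`-coordinate. -/
def pderivW (i : Fin m) (f : CS m → ℂ) : CS m → ℂ :=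
  fun t => fderiv ℂ f t (Pi.single i 1, 0)

def pderivList : List (Fin m) → (CS m → ℂ) → CS m → ℂ
  | [], f => f
  | i :: L, f => pderivW i (pderivList L f)

def indexList (β : Fin m → ℕ) : List (Fin m) :=
  (List.finRange m).flatMap fun i => List.replicate (β i) i

/-- The iterated partial derivative `∂_w^β f`. -/
def pderivMulti (β : Fin m → ℕ) (f : CS m → ℂ) : CS m → ℂ :=
  pderivList (indexList β) f

/-- The morphism of `k`-jets of Segre varieties
`φ'_k : (t', τ') ↦ (t', (∂^β_{w'}[z' − Θ̄'(w', τ')](t'))_{|β| ≤ k})`, written in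
the holomorphic parametrization `(t, ζ) ↦ (t, (ζ, Θ(ζ, t)))` of the extrinsic
complexification `M^c`. -/
def segreJetMap (Θ : (Fin m → ℕ) → CS m → ℂ) (k : ℕ) :
    CS m × (Fin m → ℂ) → CS m × ((Fin m → Fin (k + 1)) → ℂ) :=
  fun p =>
    (p.1, fun β =>
      if mdeg (fun i => (β i : ℕ)) ≤ k then
        pderivMulti (fun i => (β i : ℕ))
          (fun s => s.2 - ThetaBar Θ s.1 (p.2, ThetaSum Θ p.2 p.1)) p.1
      else 0)

/-- The rank of the differential of a map at a point. -/
def mapRankAt {X Y : Type*} [NormedAddCommGroup X] [NormedSpace ℂ X]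
    [NormedAddCommGroup Y] [NormedSpace ℂ Y] (f : X → Y) (p : X) : ℕ :=
  Module.finrank ℂ (LinearMap.range (fderiv ℂ f p).toLinearMap)

/-- Parameter domain for the complexification. -/
def segreDomain (m : ℕ) (r : ℝ) : Set (CS m × (Fin m → ℂ)) :=
  {p | ‖p.1‖ < r ∧ ‖p.2‖ < r}

/-- The morphism of `k`-jets of Segre varieties has generic rank `ρ`. -/
def SegreGenericRank (Θ : (Fin m → ℕ) → CS m → ℂ) (r : ℝ) (k ρ : ℕ) : Prop :=
  (∀ p ∈ segreDomain m r, mapRankAt (segreJetMap Θ k) p ≤ ρ) ∧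
  ∃ p ∈ segreDomain m r, mapRankAt (segreJetMap Θ k) p = ρ

/-- The `k`-jet morphism has locally constant rank `ρ` in a neighborhood of the
point of the complexification corresponding to `(q, q̄)`. -/
def SegreConstRankNear (Θ : (Fin m → ℕ) → CS m → ℂ) (k ρ : ℕ) (q : CS m) : Prop :=
  ∀ᶠ p in 𝓝 (q, conjW q.1), mapRankAt (segreJetMap Θ k) p = ρ

/-- Normal form of a defining series with respect to the splitting
`t' = (w', v', z') ∈ ℂ^a × ℂ^{m-a} × ℂ`: the series involves no `v̄'` and its
coefficients are independent of `v'`. -/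
def NormalFormSeries (a : ℕ) (Θ : (Fin m → ℕ) → CS m → ℂ) : Prop :=
  (∀ β : Fin m → ℕ, (∃ i : Fin m, a ≤ (i : ℕ) ∧ β i ≠ 0) → Θ β = 0) ∧
  ∀ β, ∀ s t : CS m, (∀ i : Fin m, (i : ℕ) < a → s.1 i = t.1 i) → s.2 = t.2 →
    Θ β s = Θ β t

def extendIdx (m a : ℕ) (β : Fin a → ℕ) : Fin m → ℕ :=
  fun i => if h : (i : ℕ) < a then β ⟨i, h⟩ else 0

def embedCS (m a : ℕ) (t : CS a) : CS m :=
  ((fun i => if h : (i : ℕ) < a then t.1 ⟨i, h⟩ else 0), t.2)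

/-- The defining series of the reduced hypersurface `M̲' ⊆ ℂ^{a+1}` underlying
a series in normal form. -/
def reducedSeries (m a : ℕ) (Θ : (Fin m → ℕ) → CS m → ℂ) :
    (Fin a → ℕ) → CS a → ℂ :=
  fun β t => Θ (extendIdx m a β) (embedCS m a t)

end Jets

/-!
Near `0` the hypersurface contains `G(ℝⁿ)` for a holomorphic submersion `G : (ℂⁿ, 0) → (V, 0)`,
obtained by complexifying a real analytic graph. On the complex line spanned by a real vector `a`,
the smooth curve `s ↦ h(G(sa))` solves the infinite holomorphic system `Θ_β(y) = φ_β(G(ζa))` at the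
real points `ζ = s`. A one-variable Artin approximation turns this into solvability, with `y` in the
common domain of the `Θ_β`, for every small complex `ζ`; hence `φ_β(G(ζa))` inherits the bound
on `Θ_β`, for all `β` at once but on a neighborhood of `ζ = 0` that depends on `a`. Baire's theorem
gives a neighborhood that works for all `a` in a ball of `ℝⁿ`, and the maximum principle on
analytic discs attached to complex multiples of real vectors fills a full neighborhood of `0` in
`ℂⁿ`.

The Artin approximation is an induction on the number of unknowns. Call a function flat if it
vanishes to infinite order along the smooth curve `s ↦ (s, u(s))`. If the vertical
derivatives of every holomorphic function which is flat on the curve are again flat, then flat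
functions vanish identically and there is nothing to solve; otherwise some vertical derivative of a
flat function has finite order, and a blow-up followed by the implicit function theorem eliminates
one unknown.
-/

section Weierstrass

variable {E F : Type*} [NormedAddCommGroup E] [NormedSpace ℂ E]
  [NormedAddCommGroup F] [NormedSpace ℂ F]

theorem uniformCauchySeqOn_fderiv_ball {ι : Type*} {φ : Filter ι} {f : ι → E → F} {x : E} {r : ℝ}
    (hr : 0 < r) (hd : ∀ n, DifferentiableOn ℂ (f n) (ball x (r + r)))
    (hf : UniformCauchySeqOn f φ (ball x (r + r))) :
    UniformCauchySeqOn (fun n => fderiv ℂ (f n)) φ (ball x r) := by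
  intro u hu
  obtain ⟨ε, hε, hεu⟩ := Metric.mem_uniformity_dist.mp hu
  have hε' : 0 < ε * r / 4 := by positivity
  filter_upwards [hf _ (Metric.dist_mem_uniformity hε')] with ⟨n, k⟩ hnk y hy
  have hsub : ball y r ⊆ ball x (r + r) := ball_subset_ball' (by linarith [mem_ball.mp hy])
  have hdist : MapsTo (f n - f k) (ball y r) (closedBall ((f n - f k) y) (ε * r / 2)) := by
    intro z hz
    have hz' := hnk z (hsub hz)
    have hy' := hnk y (hsub (mem_ball_self hr))
    simp only [dist_eq_norm] at hz' hy'
    rw [mem_closedBall, dist_eq_norm]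
    calc ‖(f n - f k) z - (f n - f k) y‖ ≤ ‖f n z - f k z‖ + ‖f n y - f k y‖ := norm_sub_le _ _
      _ ≤ ε * r / 2 := by linarith
  have hat (j : ι) : DifferentiableAt ℂ (f j) y :=
    (hd j).differentiableAt (isOpen_ball.mem_nhds (hsub (mem_ball_self hr)))
  refine hεu ?_
  rw [dist_eq_norm, ← fderiv_sub (hat n) (hat k)]
  refine (Complex.norm_fderiv_le_div_of_mapsTo_ball
    (((hd n).mono hsub).sub ((hd k).mono hsub)) hdist hr).trans_lt ?_
  rw [mul_div_right_comm, mul_div_cancel_right₀ _ hr.ne']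
  exact half_lt_self hε

theorem differentiableAt_of_tendstoUniformlyOn_ball [CompleteSpace F] {ι : Type*} {φ : Filter ι}
    [φ.NeBot] {f : ι → E → F} {g : E → F} {x : E} {r : ℝ} (hr : 0 < r)
    (hd : ∀ᶠ n in φ, DifferentiableOn ℂ (f n) (ball x r))
    (hf : TendstoUniformlyOn f g φ (ball x r)) : DifferentiableAt ℂ g x := by
  classical
  wlog hd' : ∀ n, DifferentiableOn ℂ (f n) (ball x r) generalizing f
  · refine this (f := fun n => if DifferentiableOn ℂ (f n) (ball x r) then f n else 0)
      (hd.mono fun n hn => by rwa [if_pos hn]) (hf.congr ?_) fun n => ?_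
    · filter_upwards [hd] with n hn y _ using by rw [if_pos hn]
    · split_ifs with hn
      exacts [hn, differentiableOn_const 0]
  obtain ⟨s, rfl⟩ : ∃ s, r = s + s := ⟨r / 2, by ring⟩
  have hs : 0 < s := by linarith
  have hsub : ball x s ⊆ ball x (s + s) := ball_subset_ball (by linarith)
  have hcauchy := uniformCauchySeqOn_fderiv_ball hs hd' hf.uniformCauchySeqOn
  choose! g' hg' using fun y (hy : y ∈ ball x s) =>
    CompleteSpace.complete (hcauchy.cauchy_map hy)
  exact (hasFDerivAt_of_tendstoUniformlyOn isOpen_ball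
    (hcauchy.tendstoUniformlyOn_of_tendsto hg')
    (fun n y hy => ((hd' n).differentiableAt (isOpen_ball.mem_nhds (hsub hy))).hasFDerivAt)
    (fun y hy => hf.tendsto_at (hsub hy)) (mem_ball_self hs)).differentiableAt

theorem norm_sub_sub_fderiv_le_of_mapsTo_ball {f : E → F} {x v : E} {r M : ℝ}
    (hd : DifferentiableOn ℂ f (ball x r)) (hM : MapsTo f (ball x r) (closedBall (f x) M))
    (hv : ‖v‖ < r) :
    ‖f (x + v) - f x - fderiv ℂ f x v‖ ≤ 2 * M * (‖v‖ / r) ^ 2 := by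
  have hr : 0 < r := (norm_nonneg v).trans_lt hv
  have hf' := Complex.norm_fderiv_le_div_of_mapsTo_ball hd hM hr
  have hx := (hd.differentiableAt (ball_mem_nhds x hr)).hasFDerivAt
  let g : E → F := fun z => f z - fderiv ℂ f x (z - x)
  have hg : MapsTo g (ball x r) (closedBall (g x) (2 * M)) := by
    intro z hz
    have hfz := hM hz
    rw [mem_ball, dist_eq_norm] at hz
    rw [mem_closedBall, dist_eq_norm] at hfz ⊢
    have hM0 := (norm_nonneg _).trans hfz
    calc ‖g z - g x‖ = ‖(f z - f x) - fderiv ℂ f x (z - x)‖ := by simp [g]; abel_nf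
      _ ≤ ‖f z - f x‖ + ‖fderiv ℂ f x‖ * ‖z - x‖ :=
        (norm_sub_le _ _).trans (by gcongr; exact ContinuousLinearMap.le_opNorm _ _)
      _ ≤ M + M / r * r := by gcongr
      _ = 2 * M := by field_simp; ring
  have hgd : DifferentiableOn ℂ g (ball x r) := by fun_prop
  have hlo : (g · - g x) =o[𝓝 x] fun z => ‖z - x‖ ^ 1 := by
    simp only [pow_one]
    refine hx.isLittleO.norm_right.congr_left fun z => ?_
    simp [g]; abel
  have := Complex.dist_le_mul_div_pow_of_mapsTo_ball_of_isLittleO hgd hg hlo (z := x + v)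
    (by simpa using hv)
  simpa [g, dist_eq_norm, sub_right_comm] using this

theorem exists_ball_forall_mapsTo_closedBall {X Y : Type*} [PseudoMetricSpace X]
    [PseudoMetricSpace Y] {f : X → Y} {U : Set X} {x₀ : X} (hU : U ∈ 𝓝 x₀)
    (hf : ContinuousAt f x₀) : ∃ r > 0,
      ∀ x ∈ ball x₀ r, ball x r ⊆ U ∧ MapsTo f (ball x r) (closedBall (f x) 1) := by
  obtain ⟨R, hR, hRU⟩ := Metric.mem_nhds_iff.mp
    (inter_mem hU (hf.preimage_mem_nhds (ball_mem_nhds (f x₀) (half_pos one_pos))))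
  refine ⟨R / 2, half_pos hR, fun x hx => ?_⟩
  have hsub : ball x (R / 2) ⊆ ball x₀ R := ball_subset_ball' (by linarith [mem_ball.mp hx])
  refine ⟨fun z hz => (hRU (hsub hz)).1, fun z hz => ?_⟩
  have hfx := mem_ball.mp (hRU (hsub (mem_ball_self (half_pos hR)))).2
  have hfz := mem_ball.mp (hRU (hsub hz)).2
  rw [mem_closedBall]
  linarith [dist_triangle_right (f z) (f x) (f x₀)]

theorem eventually_norm_smul_lt (v : E) {r : ℝ} (hr : 0 < r) :
    ∀ᶠ ξ in 𝓝 (0 : ℂ), ‖ξ • v‖ < r :=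
  ContinuousAt.eventually_lt (by fun_prop) continuousAt_const (by simpa using hr)

theorem tendstoUniformlyOn_slope_ball {f : E → F} {x₀ : E} {r M : ℝ} (hr : 0 < r)
    (hd : ∀ x ∈ ball x₀ r, DifferentiableOn ℂ f (ball x r))
    (hM : ∀ x ∈ ball x₀ r, MapsTo f (ball x r) (closedBall (f x) M)) (v : E) :
    TendstoUniformlyOn (fun ξ x => ξ⁻¹ • (f (x + ξ • v) - f x)) (fun x => fderiv ℂ f x v)
      (𝓝[≠] (0 : ℂ)) (ball x₀ r) := by
  rw [Metric.tendstoUniformlyOn_iff]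
  intro ε hε
  have hlim : Tendsto (fun ξ : ℂ => 2 * M * (‖v‖ / r) ^ 2 * ‖ξ‖) (𝓝[≠] 0) (𝓝 0) := by
    have : Tendsto (fun ξ : ℂ => 2 * M * (‖v‖ / r) ^ 2 * ‖ξ‖) (𝓝 0) (𝓝 _) :=
      Continuous.tendsto (by fun_prop) 0
    simpa using this.mono_left nhdsWithin_le_nhds
  filter_upwards [hlim.eventually_lt_const hε, eventually_mem_nhdsWithin,
    nhdsWithin_le_nhds (eventually_norm_smul_lt v hr)] with ξ hξ hξ0 hξv x hx
  rw [dist_comm, dist_eq_norm]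
  calc ‖ξ⁻¹ • (f (x + ξ • v) - f x) - fderiv ℂ f x v‖
      = ‖ξ‖⁻¹ * ‖f (x + ξ • v) - f x - fderiv ℂ f x (ξ • v)‖ := by
        rw [← norm_inv, ← norm_smul, smul_sub _ (_ - _), map_smul, inv_smul_smul₀ hξ0]
    _ ≤ ‖ξ‖⁻¹ * (2 * M * (‖ξ • v‖ / r) ^ 2) := by
        gcongr
        exact norm_sub_sub_fderiv_le_of_mapsTo_ball (hd x hx) (hM x hx) hξv
    _ = 2 * M * (‖v‖ / r) ^ 2 * ‖ξ‖ := by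
        have := norm_ne_zero_iff.mpr hξ0
        rw [norm_smul]
        field_simp
    _ < ε := hξ

theorem differentiableOn_fderiv_apply [CompleteSpace F] {f : E → F} {U : Set E} (hU : IsOpen U)
    (hf : DifferentiableOn ℂ f U) (v : E) : DifferentiableOn ℂ (fun x => fderiv ℂ f x v) U := by
  intro x₀ hx₀
  have hU₀ := hU.mem_nhds hx₀
  obtain ⟨r, hr, hball⟩ :=
    exists_ball_forall_mapsTo_closedBall hU₀ (hf.differentiableAt hU₀).continuousAt
  refine (differentiableAt_of_tendstoUniformlyOn_ball hr ?_ (tendstoUniformlyOn_slope_ball hr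
    (fun x hx => hf.mono (hball x hx).1) (fun x hx => (hball x hx).2) v)).differentiableWithinAt
  filter_upwards [nhdsWithin_le_nhds (eventually_norm_smul_lt v hr)] with ξ hξ
  refine ((hf.comp (by fun_prop) fun x hx => ?_).sub
    (hf.mono fun x hx => (hball x hx).1 (mem_ball_self hr))).const_smul ξ⁻¹
  exact (hball x hx).1 (by simpa using hξ)

theorem contDiffOn_nat_of_differentiableOn [FiniteDimensional ℂ E] [CompleteSpace F] {f : E → F}
    {U : Set E} (hU : IsOpen U) (hf : DifferentiableOn ℂ f U) (n : ℕ) : ContDiffOn ℂ n f U := by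
  induction n generalizing f with
  | zero => exact contDiffOn_zero.mpr hf.continuousOn
  | succ n ih =>
    refine (contDiffOn_succ_iff_fderiv_of_isOpen hU).mpr
      ⟨hf, fun h => absurd h (WithTop.natCast_ne_top n), ?_⟩
    exact contDiffOn_clm_apply.mpr fun v => ih (differentiableOn_fderiv_apply hU hf v)

end Weierstrass

section Division

variable {E F : Type*} [NormedAddCommGroup E] [NormedSpace ℂ E]
  [NormedAddCommGroup F] [NormedSpace ℂ F]

theorem norm_dslope_sub_sub_le {g g' : ℂ → F} {ζ : ℂ} {a b : F} {C : ℝ}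
    (hg : ∀ ξ ∈ closedBall (0 : ℂ) ‖ζ‖, HasDerivAt g (g' ξ) ξ)
    (hC : ∀ ξ ∈ closedBall (0 : ℂ) ‖ζ‖, ‖g' ξ - a - ξ • b‖ ≤ C) :
    ‖dslope g 0 ζ - a - (ζ / 2) • b‖ ≤ C := by
  have h0 : (0 : ℂ) ∈ closedBall (0 : ℂ) ‖ζ‖ := by simp
  rcases eq_or_ne ζ 0 with rfl | hζ
  · simpa [(hg 0 h0).deriv] using hC 0 h0
  have hderiv (ξ : ℂ) (hξ : ξ ∈ closedBall (0 : ℂ) ‖ζ‖) :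
      HasDerivAt (fun ξ => g ξ - ξ • a - (ξ ^ 2 / 2) • b) (g' ξ - a - ξ • b) ξ := by
    have hsq : HasDerivAt (fun ξ : ℂ => ξ ^ 2 / 2) ξ ξ := by
      simpa using (hasDerivAt_pow 2 ξ).div_const 2
    simpa using ((hg ξ hξ).fun_sub ((hasDerivAt_id ξ).smul_const a)).fun_sub (hsq.smul_const b)
  have hmv := (convex_closedBall (0 : ℂ) ‖ζ‖).norm_image_sub_le_of_norm_hasDerivWithin_le
    (fun ξ hξ => (hderiv ξ hξ).hasDerivWithinAt) hC h0 (y := ζ) (by simp)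
  have heq : dslope g 0 ζ - a - (ζ / 2) • b = ζ⁻¹ • (g ζ - ζ • a - (ζ ^ 2 / 2) • b - g 0) := by
    rw [dslope_of_ne _ hζ, slope_def_module]
    simp only [smul_sub, smul_smul, sub_zero]
    rw [inv_mul_cancel₀ hζ, one_smul, show ζ⁻¹ * (ζ ^ 2 / 2) = ζ / 2 by field_simp]
    abel
  rw [heq, norm_smul, norm_inv, inv_mul_le_iff₀ (norm_pos_iff.mpr hζ), mul_comm]
  simpa using hmv

theorem hasDerivAt_comp_mk_left {f : ℂ × E → F} {ξ : ℂ} {y : E} (hf : DifferentiableAt ℂ f (ξ, y)) :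
    HasDerivAt (fun ξ => f (ξ, y)) (fderiv ℂ f (ξ, y) (1, 0)) ξ :=
  hf.hasFDerivAt.comp_hasDerivAt ξ ((hasDerivAt_id ξ).prodMk (hasDerivAt_const ξ y))

theorem differentiableAt_dslope_prod_zero [CompleteSpace F] {f : ℂ × E → F} {y : E}
    (hf : ∀ᶠ x in 𝓝 ((0 : ℂ), y), DifferentiableAt ℂ f x) :
    DifferentiableAt ℂ (fun x : ℂ × E => dslope (fun ξ => f (ξ, x.2)) 0 x.1) (0, y) := by
  obtain ⟨r, hr, hball⟩ := Metric.eventually_nhds_iff_ball.mp hf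
  have hd : DifferentiableOn ℂ f (ball (0, y) r) := fun x hx => (hball x hx).differentiableWithinAt
  have hA := ((differentiableOn_fderiv_apply isOpen_ball hd (1, 0)).differentiableAt
    (ball_mem_nhds _ hr)).hasFDerivAt
  set A := fderiv ℂ (fun x => fderiv ℂ f x (1, 0)) (0, y)
  refine HasFDerivAt.differentiableAt (f' := A ∘L
    (((2 : ℂ)⁻¹ • ContinuousLinearMap.fst ℂ ℂ E).prod (ContinuousLinearMap.snd ℂ ℂ E))) ?_
  rw [hasFDerivAt_iff_isLittleO, Asymptotics.isLittleO_iff] at hA ⊢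
  intro ε hε
  obtain ⟨δ, hδ, hδA⟩ := Metric.eventually_nhds_iff_ball.mp (hA hε)
  filter_upwards [ball_mem_nhds _ (lt_min hδ hr)] with ⟨ζ, z⟩ hx
  have hnear (ξ : ℂ) (hξ : ξ ∈ closedBall (0 : ℂ) ‖ζ‖) :
      ‖(ξ, z) - (0, y)‖ ≤ ‖(ζ, z) - (0, y)‖ := by
    simpa [Prod.norm_def] using max_le_max_right ‖z - y‖ (mem_closedBall_zero_iff.mp hξ)
  have hmem (ξ : ℂ) (hξ : ξ ∈ closedBall (0 : ℂ) ‖ζ‖) : dist (ξ, z) (0, y) < min δ r := by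
    rw [dist_eq_norm]
    exact (hnear ξ hξ).trans_lt (by rwa [← dist_eq_norm])
  have hf' (ξ : ℂ) (hξ : ξ ∈ closedBall (0 : ℂ) ‖ζ‖) :=
    hasDerivAt_comp_mk_left (hball (ξ, z) ((hmem ξ hξ).trans_le (min_le_right _ _)))
  have hA_split (ξ : ℂ) : A ((ξ, z) - (0, y)) = A (0, z - y) + ξ • A (1, 0) := by
    rw [← map_smul, ← map_add]
    simp
  have hy : dslope (fun ξ => f (ξ, y)) 0 0 = fderiv ℂ f (0, y) (1, 0) := by
    rw [dslope_same, (hasDerivAt_comp_mk_left (hball _ (mem_ball_self hr))).deriv]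
  have key := norm_dslope_sub_sub_le hf' (a := fderiv ℂ f (0, y) (1, 0) + A (0, z - y))
    (b := A (1, 0)) (C := ε * ‖(ζ, z) - (0, y)‖) fun ξ hξ => by
      rw [← sub_sub, sub_sub _ (A _), ← hA_split]
      exact (hδA _ ((hmem ξ hξ).trans_le (min_le_left _ _))).trans (by gcongr; exact hnear ξ hξ)
  have hA_half : (A ∘L ((2 : ℂ)⁻¹ • ContinuousLinearMap.fst ℂ ℂ E).prod
      (ContinuousLinearMap.snd ℂ ℂ E)) ((ζ, z) - (0, y)) = A (0, z - y) + (ζ / 2) • A (1, 0) := by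
    rw [← hA_split]
    simp [div_eq_inv_mul]
  rwa [hA_half, hy, ← sub_sub, sub_sub _ _ (A _)]

theorem differentiableOn_dslope_prod [CompleteSpace F] {f : ℂ × E → F} {U : Set (ℂ × E)}
    (hU : IsOpen U) (hU₀ : ∀ x ∈ U, ((0 : ℂ), x.2) ∈ U) (hf : DifferentiableOn ℂ f U) :
    DifferentiableOn ℂ (fun x : ℂ × E => dslope (fun ξ => f (ξ, x.2)) 0 x.1) U := by
  rintro ⟨ζ, y⟩ hx
  refine DifferentiableAt.differentiableWithinAt ?_
  have hd {x : ℂ × E} (hx : x ∈ U) : DifferentiableAt ℂ f x := hf.differentiableAt (hU.mem_nhds hx)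
  rcases eq_or_ne ζ 0 with rfl | hζ
  · exact differentiableAt_dslope_prod_zero ((hU.eventually_mem hx).mono fun x => hd)
  have hquot : DifferentiableAt ℂ (fun x : ℂ × E => x.1⁻¹ • (f x - f (0, x.2))) (ζ, y) := by
    have h0 : DifferentiableAt ℂ (fun x : ℂ × E => f (0, x.2)) (ζ, y) :=
      (hd (hU₀ _ hx)).comp (ζ, y) (by fun_prop)
    exact (differentiableAt_fst.inv hζ).smul ((hd hx).sub h0)
  refine hquot.congr_of_eventuallyEq ?_
  filter_upwards [continuous_fst.continuousAt.eventually_ne hζ] with x hx0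
  rw [dslope_of_ne _ hx0, slope_def_module, sub_zero]

theorem exists_eq_pow_smul_of_isBigO [CompleteSpace F] {f : ℂ × E → F} {U : Set (ℂ × E)}
    (hU : IsOpen U) (hU₀ : ∀ x ∈ U, ((0 : ℂ), x.2) ∈ U) (hf : DifferentiableOn ℂ f U) (n : ℕ)
    (hO : ∀ x ∈ U, (fun ζ : ℂ => f (ζ, x.2)) =O[𝓝[≠] 0] fun ζ => ζ ^ n) :
    ∃ Q : ℂ × E → F, DifferentiableOn ℂ Q U ∧ ∀ x ∈ U, f x = x.1 ^ n • Q x := by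
  induction n generalizing f with
  | zero => exact ⟨f, hf, fun x _ => by simp⟩
  | succ n ih =>
    have hzero (x : ℂ × E) (hx : x ∈ U) : f (0, x.2) = 0 := by
      have hcont : ContinuousAt (fun ζ : ℂ => f (ζ, x.2)) 0 :=
        (hf.differentiableAt (hU.mem_nhds (hU₀ x hx))).continuousAt.comp
          (f := fun ζ => (ζ, x.2)) (by fun_prop)
      refine tendsto_nhds_unique (hcont.tendsto.mono_left nhdsWithin_le_nhds)
        ((hO x hx).trans_tendsto ?_)
      exact ((continuous_pow (n + 1)).tendsto' 0 0 (by simp)).mono_left nhdsWithin_le_nhds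
    have hdiv (x : ℂ × E) (hx : x ∈ U) (ζ : ℂ) :
        f (ζ, x.2) = ζ • dslope (fun ξ => f (ξ, x.2)) 0 ζ := by
      simpa [hzero x hx] using (sub_smul_dslope (fun ξ => f (ξ, x.2)) 0 ζ).symm
    obtain ⟨Q, hQ, hfQ⟩ := ih (differentiableOn_dslope_prod hU hU₀ hf) fun x hx => by
      have h := (Asymptotics.isBigO_refl (fun ζ : ℂ => ζ⁻¹) (𝓝[≠] 0)).smul (hO x hx)
      refine h.congr' ?_ ?_ <;> filter_upwards [eventually_mem_nhdsWithin] with ζ hζ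
      · rw [hdiv x hx, inv_smul_smul₀ hζ]
      · rw [pow_succ', smul_eq_mul, inv_mul_cancel_left₀ hζ]
    refine ⟨Q, hQ, fun x hx => ?_⟩
    rw [pow_succ', mul_smul, ← hfQ x hx]
    exact hdiv x hx x.1

end Division

section Flat

variable {E F : Type*} [NormedAddCommGroup E] {l : Filter ℂ}

theorem pow_isBigO_pow_of_le (hl : l ≤ 𝓝 0) {m n : ℕ} (hmn : m ≤ n) :
    (fun ζ : ℂ => ζ ^ n) =O[l] fun ζ => ζ ^ m := by
  have h1 : (fun ζ : ℂ => ζ ^ (n - m)) =O[l] fun _ => (1 : ℂ) :=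
    ((continuous_pow (n - m)).continuousAt.isBigO_one ℂ).mono hl
  refine ((Asymptotics.isBigO_refl (fun ζ : ℂ => ζ ^ m) l).mul h1).congr (fun ζ => ?_) fun ζ => ?_
  · rw [← pow_add, Nat.add_sub_cancel' hmn]
  · rw [mul_one]

theorem tendsto_zero_of_isBigO_pow_succ (hl : l ≤ 𝓝 0) {w : ℂ → E} {n : ℕ}
    (hw : w =O[l] fun ζ => ζ ^ (n + 1)) : Tendsto w l (𝓝 0) :=
  hw.trans_tendsto (((continuous_pow (n + 1)).tendsto' 0 0 (by simp)).mono_left hl)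

theorem tendsto_prodMk_id (hl : l ≤ 𝓝 0) {u : ℂ → E} (hu0 : Tendsto u l (𝓝 0)) :
    Tendsto (fun ζ => (ζ, u ζ)) l (𝓝 0) :=
  (tendsto_id.mono_left hl).prodMk_nhds hu0

/-- `w` vanishes to infinite order at the origin along the filter `l`. -/
def FlatAlong (l : Filter ℂ) (w : ℂ → E) : Prop :=
  ∀ q : ℕ, w =O[l] fun ζ => ζ ^ q

variable [NormedSpace ℂ E] [NormedAddCommGroup F] [NormedSpace ℂ F]

theorem isBigO_inv_pow_smul (hl : l ≤ 𝓝[≠] 0) {w : ℂ → E} {p q : ℕ}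
    (hw : w =O[l] fun ζ => ζ ^ (q + p)) : (fun ζ => (ζ ^ p)⁻¹ • w ζ) =O[l] fun ζ => ζ ^ q := by
  refine ((Asymptotics.isBigO_refl (fun ζ : ℂ => (ζ ^ p)⁻¹) l).smul hw).congr' .rfl ?_
  filter_upwards [hl self_mem_nhdsWithin] with ζ hζ
  rw [smul_eq_mul, pow_add, mul_comm, mul_inv_cancel_right₀ (pow_ne_zero p hζ)]

theorem isBigO_pow_of_eventuallyEq_pow_smul {V g : ℂ → E} {p : ℕ} (hg : ContinuousAt g 0)
    (hV : ∀ᶠ z in 𝓝 (0 : ℂ), V z = z ^ p • g z) : V =O[𝓝 0] fun z => z ^ p := by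
  refine ((Asymptotics.isBigO_refl (fun z : ℂ => z ^ p) (𝓝 0)).smul (hg.isBigO_one ℂ)).congr'
    (hV.mono fun z hz => hz.symm) ?_
  simp

theorem exists_analyticAt_eq_pow_smul_of_isBigO [l.NeBot] (hl : l ≤ 𝓝[≠] 0) {V : ℂ → E}
    (hV : AnalyticAt ℂ V 0) {p : ℕ} (hO : V =O[l] fun ζ => ζ ^ p) :
    ∃ g : ℂ → E, AnalyticAt ℂ g 0 ∧ ∀ᶠ z in 𝓝 (0 : ℂ), V z = z ^ p • g z := by
  have hl₀ : l ≤ 𝓝 0 := hl.trans nhdsWithin_le_nhds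
  suffices hp : (p : ℕ∞) ≤ analyticOrderAt V 0 by
    simpa only [sub_zero] using (natCast_le_analyticOrderAt hV).mp hp
  by_contra! hlt
  obtain ⟨k, hk⟩ := ENat.ne_top_iff_exists.mp (ne_top_of_lt hlt)
  have hkp : k < p := by exact_mod_cast hk ▸ hlt
  obtain ⟨g, hg, hg0, hVg⟩ := hV.analyticOrderAt_eq_natCast.mp hk.symm
  have hgO : g =O[l] fun ζ => ζ ^ (p - k) := by
    rw [← Nat.sub_add_cancel hkp.le] at hO
    refine (isBigO_inv_pow_smul hl hO).congr' ?_ .rfl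
    filter_upwards [hl₀ hVg, hl self_mem_nhdsWithin] with z hz hz0
    rw [hz, sub_zero, inv_smul_smul₀ (pow_ne_zero k hz0)]
  obtain ⟨n, hn⟩ := Nat.exists_eq_add_one_of_ne_zero (Nat.sub_ne_zero_of_lt hkp)
  rw [hn] at hgO
  exact hg0 (tendsto_nhds_unique (hg.continuousAt.tendsto.mono_left hl₀)
    (tendsto_zero_of_isBigO_pow_succ hl₀ hgO))

theorem isBigO_deriv_of_isBigO_pow_succ [CompleteSpace E] [l.NeBot] (hl : l ≤ 𝓝[≠] 0) {V : ℂ → E}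
    (hV : AnalyticAt ℂ V 0) {q : ℕ} (hO : V =O[l] fun ζ => ζ ^ (q + 1)) :
    deriv V =O[𝓝 0] fun ζ => ζ ^ q := by
  obtain ⟨g, hg, hVg⟩ := exists_analyticAt_eq_pow_smul_of_isBigO hl hV hO
  refine isBigO_pow_of_eventuallyEq_pow_smul (g := fun z => ((q : ℂ) + 1) • g z + z • deriv g z)
    ((analyticAt_const.smul hg).add (analyticAt_id.smul hg.deriv)).continuousAt ?_
  filter_upwards [hVg.eventually_nhds, hg.eventually_analyticAt] with z hz hgz
  rw [EventuallyEq.deriv_eq hz,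
    ((hasDerivAt_pow (q + 1) z).fun_smul hgz.differentiableAt.hasDerivAt).deriv]
  simp only [Nat.add_sub_cancel, Nat.cast_add, Nat.cast_one]
  module

/-- `u` has an asymptotic expansion of every order at the origin along the filter `l`, with
vanishing constant term; analytic germs play the role of the Taylor polynomials. -/
def HasTaylorAlong (l : Filter ℂ) (u : ℂ → E) : Prop :=
  ∀ q : ℕ, ∃ T : ℂ → E, AnalyticAt ℂ T 0 ∧ T 0 = 0 ∧ (fun ζ => u ζ - T ζ) =O[l] fun ζ => ζ ^ q

theorem HasTaylorAlong.tendsto_zero (hl : l ≤ 𝓝 0) {u : ℂ → E} (hu : HasTaylorAlong l u) :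
    Tendsto u l (𝓝 0) := by
  obtain ⟨T, hT, hT0, hTu⟩ := hu 1
  simpa [hT0] using (tendsto_zero_of_isBigO_pow_succ hl hTu).add
    (hT.continuousAt.tendsto.mono_left hl)

theorem tendsto_prodMk_id_of_analyticAt {T : ℂ → E} (hT : AnalyticAt ℂ T 0) (hT0 : T 0 = 0) :
    Tendsto (fun ζ => (ζ, T ζ)) (𝓝 0) (𝓝 0) :=
  tendsto_prodMk_id le_rfl (hT0 ▸ hT.continuousAt.tendsto)

theorem isBigO_comp_graph_sub {f : ℂ × E → F} {f' : ℂ × E →L[ℂ] F} (hf : HasStrictFDerivAt f f' 0)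
    (hl : l ≤ 𝓝 0) {u v : ℂ → E} (hu0 : Tendsto u l (𝓝 0)) (hv0 : Tendsto v l (𝓝 0)) :
    (fun ζ => f (ζ, u ζ) - f (ζ, v ζ)) =O[l] fun ζ => u ζ - v ζ := by
  have h := hf.isBigO_sub.comp_tendsto
    ((tendsto_prodMk_id hl hu0).prodMk_nhds (tendsto_prodMk_id hl hv0))
  exact h.trans (Asymptotics.isBigO_of_le _ fun ζ => by simp)

theorem FlatAlong.comp_graph {f : ℂ × E → F} {f' : ℂ × E →L[ℂ] F} (hf : HasStrictFDerivAt f f' 0)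
    (hl : l ≤ 𝓝 0) {u v : ℂ → E} (hu0 : Tendsto u l (𝓝 0)) (hv0 : Tendsto v l (𝓝 0))
    (huv : FlatAlong l fun ζ => u ζ - v ζ) (h : FlatAlong l fun ζ => f (ζ, v ζ)) :
    FlatAlong l fun ζ => f (ζ, u ζ) := fun q => by
  simpa using ((isBigO_comp_graph_sub hf hl hu0 hv0).trans (huv q)).add (h q)

end Flat

section FlatDerivatives

variable {E F : Type*} [NormedAddCommGroup E] [NormedSpace ℂ E]
  [NormedAddCommGroup F] [NormedSpace ℂ F] {l : Filter ℂ}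

theorem norm_le_add_norm_comp_inr (L : ℂ × E →L[ℂ] F) :
    ‖L‖ ≤ ‖L (1, 0)‖ + ‖L ∘L ContinuousLinearMap.inr ℂ ℂ E‖ := by
  refine L.opNorm_le_bound (by positivity) fun x => ?_
  have hx : L x = x.1 • L (1, 0) + (L ∘L ContinuousLinearMap.inr ℂ ℂ E) x.2 := by
    rw [← map_smul, ContinuousLinearMap.comp_apply, ← map_add]
    simp
  calc ‖L x‖ ≤ ‖x.1‖ * ‖L (1, 0)‖ + ‖L ∘L ContinuousLinearMap.inr ℂ ℂ E‖ * ‖x.2‖ := by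
        rw [hx, ← norm_smul]
        exact norm_add_le_of_le le_rfl (ContinuousLinearMap.le_opNorm _ _)
    _ ≤ ‖x‖ * ‖L (1, 0)‖ + ‖L ∘L ContinuousLinearMap.inr ℂ ℂ E‖ * ‖x‖ := by
        gcongr
        exacts [norm_fst_le x, norm_snd_le x]
    _ = (‖L (1, 0)‖ + ‖L ∘L ContinuousLinearMap.inr ℂ ℂ E‖) * ‖x‖ := by ring

theorem analyticAt_comp_graph [CompleteSpace E] [CompleteSpace F] {f : ℂ × E → F}
    (hf : ∀ᶠ x in 𝓝 0, DifferentiableAt ℂ f x) {T : ℂ → E} (hT : AnalyticAt ℂ T 0)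
    (hT0 : T 0 = 0) : AnalyticAt ℂ (fun ζ => f (ζ, T ζ)) 0 := by
  rw [Complex.analyticAt_iff_eventually_differentiableAt]
  filter_upwards [(tendsto_prodMk_id_of_analyticAt hT hT0).eventually hf,
    hT.eventually_analyticAt] with ζ hfζ hTζ
  exact hfζ.comp ζ (differentiableAt_id.prodMk hTζ.differentiableAt)

theorem eventually_deriv_comp_graph [CompleteSpace E] {f : ℂ × E → F}
    (hf : ∀ᶠ x in 𝓝 0, DifferentiableAt ℂ f x) {T : ℂ → E} (hT : AnalyticAt ℂ T 0)
    (hT0 : T 0 = 0) : ∀ᶠ ζ in 𝓝 (0 : ℂ),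
    deriv (fun ζ => f (ζ, T ζ)) ζ = fderiv ℂ f (ζ, T ζ) (1, deriv T ζ) := by
  filter_upwards [(tendsto_prodMk_id_of_analyticAt hT hT0).eventually hf,
    hT.eventually_analyticAt] with ζ hfζ hTζ
  exact (hfζ.hasFDerivAt.comp_hasDerivAt ζ
    ((hasDerivAt_id ζ).prodMk hTζ.differentiableAt.hasDerivAt)).deriv

/- Along an approximating analytic curve `(ζ, T ζ)`, the chain rule expresses the horizontal
derivative through the vertical ones and the derivative of the flat function `f (ζ, T ζ)`. -/
theorem FlatAlong.fderiv_of_vertical [CompleteSpace E] [CompleteSpace F] [l.NeBot] (hl : l ≤ 𝓝[≠] 0)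
    {f : ℂ × E → F} (hf : ContDiffAt ℂ 2 f 0) {u : ℂ → E} (hu : HasTaylorAlong l u)
    (hflat : FlatAlong l fun ζ => f (ζ, u ζ))
    (hvert : FlatAlong l fun ζ => fderiv ℂ f (ζ, u ζ) ∘L ContinuousLinearMap.inr ℂ ℂ E) :
    FlatAlong l fun ζ => fderiv ℂ f (ζ, u ζ) := by
  intro q
  have hl₀ : l ≤ 𝓝 0 := hl.trans nhdsWithin_le_nhds
  have hu0 := hu.tendsto_zero hl₀
  obtain ⟨T, hT, hT0, hTu⟩ := hu (q + 1)
  have hTl : Tendsto T l (𝓝 0) := (hT0 ▸ hT.continuousAt.tendsto).mono_left hl₀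
  have hfd : ∀ᶠ x in 𝓝 0, DifferentiableAt ℂ f x :=
    (hf.eventually (by simp)).mono fun x hx => hx.differentiableAt two_ne_zero
  have hfs : HasStrictFDerivAt f (fderiv ℂ f 0) 0 := hf.hasStrictFDerivAt two_ne_zero
  have hfds := (hf.fderiv_right (m := 1) (by norm_num)).hasStrictFDerivAt one_ne_zero
  have hfT := (isBigO_comp_graph_sub hfs hl₀ hu0 hTl).trans hTu
  have hdT := ((isBigO_comp_graph_sub hfds hl₀ hu0 hTl).trans hTu).trans
    (pow_isBigO_pow_of_le hl₀ q.le_succ)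
  have hVd : (fun ζ => deriv (fun ζ => f (ζ, T ζ)) ζ) =O[l] fun ζ => ζ ^ q :=
    (isBigO_deriv_of_isBigO_pow_succ hl (analyticAt_comp_graph hfd hT hT0)
      (by simpa using (hflat (q + 1)).sub hfT)).mono hl₀
  have hvertT : (fun ζ => fderiv ℂ f (ζ, T ζ) ∘L ContinuousLinearMap.inr ℂ ℂ E) =O[l]
      fun ζ => ζ ^ q := by
    have h := (((ContinuousLinearMap.compL ℂ E (ℂ × E) F).flip
      (ContinuousLinearMap.inr ℂ ℂ E)).isBigO_comp _ l).trans hdT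
    refine ((hvert q).sub h).congr_left fun ζ => ?_
    simp
  have hhor : (fun ζ => fderiv ℂ f (ζ, T ζ) (1, 0)) =O[l] fun ζ => ζ ^ q := by
    have hT' : deriv T =O[l] fun _ => (1 : ℂ) := (hT.deriv.continuousAt.isBigO_one ℂ).mono hl₀
    have hvT' : (fun ζ => (fderiv ℂ f (ζ, T ζ) ∘L ContinuousLinearMap.inr ℂ ℂ E) (deriv T ζ))
        =O[l] fun ζ => ζ ^ q := by
      have h := hvertT.norm_left.mul hT'.norm_left
      simp only [mul_one] at h
      exact (Asymptotics.isBigO_of_le l fun ζ =>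
        (ContinuousLinearMap.le_opNorm _ _).trans (le_abs_self _)).trans h
    refine (hVd.sub hvT').congr' ?_ .rfl
    filter_upwards [hl₀ (eventually_deriv_comp_graph hfd hT hT0)] with ζ hζ
    rw [hζ, ContinuousLinearMap.comp_apply, ← map_sub]
    simp
  have hfT' : (fun ζ => fderiv ℂ f (ζ, T ζ)) =O[l] fun ζ => ζ ^ q :=
    (Asymptotics.isBigO_of_le l fun ζ => (norm_le_add_norm_comp_inr _).trans (le_abs_self _)).trans
      (hhor.norm_left.add hvertT.norm_left)
  simpa using hdT.add hfT'

/-- Every function holomorphic on `ball 0 ρ` which is flat along the graph of `u` has a vertical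
derivative which is flat along that graph. -/
def FlatVerticalClosed (F : Type*) [NormedAddCommGroup F] [NormedSpace ℂ F] (l : Filter ℂ)
    (u : ℂ → E) (ρ : ℝ) : Prop :=
  ∀ f : ℂ × E → F, DifferentiableOn ℂ f (ball 0 ρ) → (FlatAlong l fun ζ => f (ζ, u ζ)) →
    FlatAlong l fun ζ => fderiv ℂ f (ζ, u ζ) ∘L ContinuousLinearMap.inr ℂ ℂ E

theorem contDiffAt_zero_of_differentiableOn_ball [FiniteDimensional ℂ E] [CompleteSpace F]
    {f : E → F} {ρ : ℝ} (hρ : 0 < ρ) (hf : DifferentiableOn ℂ f (ball 0 ρ)) (n : ℕ) :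
    ContDiffAt ℂ n f 0 :=
  (contDiffOn_nat_of_differentiableOn isOpen_ball hf n).contDiffAt (ball_mem_nhds 0 hρ)

theorem iteratedDeriv_smul_line_eq_zero [FiniteDimensional ℂ E] [CompleteSpace F] [l.NeBot]
    (hl : l ≤ 𝓝[≠] 0) {u : ℂ → E} (hu : HasTaylorAlong l u) {ρ : ℝ}
    (hρ : 0 < ρ) (hclosed : FlatVerticalClosed F l u ρ) (v : ℂ × E) (k : ℕ) {f : ℂ × E → F}
    (hf : DifferentiableOn ℂ f (ball 0 ρ)) (hflat : FlatAlong l fun ζ => f (ζ, u ζ)) :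
    iteratedDeriv k (fun z : ℂ => f (z • v)) 0 = 0 := by
  have hl₀ : l ≤ 𝓝 0 := hl.trans nhdsWithin_le_nhds
  have : CompleteSpace E := FiniteDimensional.complete ℂ E
  induction k generalizing f with
  | zero =>
    have hfc : ContinuousAt f 0 := (hf.differentiableAt (ball_mem_nhds 0 hρ)).continuousAt
    have hf0 := tendsto_nhds_unique (hfc.tendsto.comp (tendsto_prodMk_id hl₀ (hu.tendsto_zero hl₀)))
      (tendsto_zero_of_isBigO_pow_succ hl₀ (hflat 1))
    simpa using hf0
  | succ k ih =>
    have hf2 : ContDiffAt ℂ 2 f 0 := contDiffAt_zero_of_differentiableOn_ball hρ hf 2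
    have hfv : FlatAlong l fun ζ => fderiv ℂ f (ζ, u ζ) v := fun q =>
      ((ContinuousLinearMap.apply ℂ F v).isBigO_comp _ l).trans
        (FlatAlong.fderiv_of_vertical hl hf2 hu hflat (hclosed f hf hflat) q)
    rw [iteratedDeriv_succ', ← ih (differentiableOn_fderiv_apply isOpen_ball hf v) hfv]
    refine Filter.EventuallyEq.iteratedDeriv_eq k ?_
    filter_upwards [eventually_norm_smul_lt v hρ] with z hz
    have hline : HasDerivAt (fun z : ℂ => z • v) v z := by
      simpa using (hasDerivAt_id z).smul_const v
    exact ((hf.differentiableAt (isOpen_ball.mem_nhds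
      (mem_ball_zero_iff.mpr hz))).hasFDerivAt.comp_hasDerivAt z hline).deriv

theorem eq_zero_of_iteratedDeriv_smul_line_eq_zero [CompleteSpace F] {f : E → F} {ρ : ℝ}
    (hf : DifferentiableOn ℂ f (ball 0 ρ)) {v : E} (hv : v ∈ ball 0 ρ)
    (hderiv : ∀ k, iteratedDeriv k (fun z : ℂ => f (z • v)) 0 = 0) : f v = 0 := by
  rcases eq_or_ne v 0 with rfl | hv0
  · simpa using hderiv 0
  have hvn : 0 < ‖v‖ := norm_pos_iff.mpr hv0
  have hline : DifferentiableOn ℂ (fun z : ℂ => f (z • v)) (ball 0 (ρ / ‖v‖)) :=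
    hf.comp (by fun_prop) fun z hz => by
      rwa [mem_ball_zero_iff, norm_smul, ← lt_div_iff₀ hvn, ← mem_ball_zero_iff]
  have hone : (1 : ℂ) ∈ ball (0 : ℂ) (ρ / ‖v‖) := by
    rwa [mem_ball_zero_iff, norm_one, one_lt_div hvn, ← mem_ball_zero_iff]
  have hsum := Complex.hasSum_taylorSeries_on_ball hline hone
  simp only [hderiv, smul_zero, one_smul] at hsum
  exact hsum.unique hasSum_zero

theorem FlatVerticalClosed.eq_zero [FiniteDimensional ℂ E] [CompleteSpace F] [l.NeBot]
    (hl : l ≤ 𝓝[≠] 0) {u : ℂ → E} (hu : HasTaylorAlong l u) {ρ : ℝ}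
    (hclosed : FlatVerticalClosed F l u ρ) {f : ℂ × E → F}
    (hf : DifferentiableOn ℂ f (ball 0 ρ)) (hflat : FlatAlong l fun ζ => f (ζ, u ζ)) {x : ℂ × E}
    (hx : x ∈ ball 0 ρ) : f x = 0 :=
  eq_zero_of_iteratedDeriv_smul_line_eq_zero hf hx fun k =>
    iteratedDeriv_smul_line_eq_zero hl hu (pos_of_mem_ball hx) hclosed x k hf hflat

end FlatDerivatives

section BlowUp

variable {E F : Type*} [NormedAddCommGroup E] [NormedSpace ℂ E]
  [NormedAddCommGroup F] [NormedSpace ℂ F] {l : Filter ℂ}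

theorem isBigO_comp_graph_sub_sub_fderiv {f : ℂ × E → F} {U : Set (ℂ × E)} (hU : U ∈ 𝓝 0)
    (hf : DifferentiableOn ℂ f U) (hl : l ≤ 𝓝 0) {u v : ℂ → E} (hu0 : Tendsto u l (𝓝 0))
    (hv0 : Tendsto v l (𝓝 0)) :
    (fun ζ => f (ζ, u ζ) - f (ζ, v ζ) - fderiv ℂ f (ζ, v ζ) (0, u ζ - v ζ)) =O[l]
      fun ζ => ‖u ζ - v ζ‖ ^ 2 := by
  obtain ⟨r, hr, hball⟩ :=
    exists_ball_forall_mapsTo_closedBall hU (hf.differentiableAt hU).continuousAt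
  have huv : ∀ᶠ ζ in l, ‖u ζ - v ζ‖ < r := by
    have h := (hu0.sub hv0).norm
    rw [sub_zero, norm_zero] at h
    exact h.eventually_lt_const hr
  refine Asymptotics.IsBigO.of_bound (2 * 1 / r ^ 2) ?_
  filter_upwards [(tendsto_prodMk_id hl hv0).eventually (ball_mem_nhds 0 hr), huv] with ζ hζ huvζ
  have hnorm : ‖((0 : ℂ), u ζ - v ζ)‖ = ‖u ζ - v ζ‖ := by simp
  obtain ⟨hsub, hmaps⟩ := hball _ hζ
  have h := norm_sub_sub_fderiv_le_of_mapsTo_ball (hf.mono hsub) hmaps (hnorm.trans_lt huvζ)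
  rw [Prod.mk_add_mk, add_zero, add_sub_cancel, hnorm] at h
  rw [norm_pow, norm_norm]
  exact h.trans_eq (by ring)

theorem exists_analyticAt_comp_graph_eq_pow_smul [CompleteSpace E] [CompleteSpace F] [l.NeBot]
    (hl : l ≤ 𝓝[≠] 0) {g : ℂ × E → F} (hg : ContDiffAt ℂ 1 g 0) {u T : ℂ → E}
    (hu0 : Tendsto u l (𝓝 0)) (hT : AnalyticAt ℂ T 0) (hT0 : T 0 = 0) {p : ℕ}
    (hTu : (fun ζ => u ζ - T ζ) =O[l] fun ζ => ζ ^ (p + 1))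
    (hgp : (fun ζ => g (ζ, u ζ)) =O[l] fun ζ => ζ ^ p)
    (hgp' : ¬(fun ζ => g (ζ, u ζ)) =O[l] fun ζ => ζ ^ (p + 1)) :
    ∃ b : ℂ → F, AnalyticAt ℂ b 0 ∧ b 0 ≠ 0 ∧ ∀ᶠ ζ in 𝓝 0, g (ζ, T ζ) = ζ ^ p • b ζ := by
  have hl₀ : l ≤ 𝓝 0 := hl.trans nhdsWithin_le_nhds
  have hgd : ∀ᶠ x in 𝓝 0, DifferentiableAt ℂ g x :=
    (hg.eventually (by simp)).mono fun x hx => hx.differentiableAt one_ne_zero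
  have hsub := (isBigO_comp_graph_sub (hg.hasStrictFDerivAt one_ne_zero) hl₀ hu0
    ((hT0 ▸ hT.continuousAt.tendsto).mono_left hl₀)).trans hTu
  have hgT : (fun ζ => g (ζ, T ζ)) =O[l] fun ζ => ζ ^ p := by
    simpa using hgp.sub (hsub.trans (pow_isBigO_pow_of_le hl₀ p.le_succ))
  obtain ⟨b, hb, hgb⟩ :=
    exists_analyticAt_eq_pow_smul_of_isBigO hl (analyticAt_comp_graph hgd hT hT0) hgT
  refine ⟨b, hb, fun hb0 => hgp' ?_, hgb⟩
  have hbO : b =O[𝓝 0] fun ζ => ζ := by simpa [hb0] using hb.differentiableAt.isBigO_sub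
  have hgT' : (fun ζ => g (ζ, T ζ)) =O[l] fun ζ => ζ ^ (p + 1) := by
    refine (((Asymptotics.isBigO_refl (fun ζ : ℂ => ζ ^ p) (𝓝 0)).smul hbO).congr' ?_
      (.of_forall fun ζ => ?_)).mono hl₀
    · exact hgb.mono fun ζ hζ => hζ.symm
    · exact (pow_succ ζ p).symm
  simpa using hsub.add hgT'

theorem isBigO_comp_graph_add_pow_smul_sub {f : ℂ × E → F} {U : Set (ℂ × E)} (hU : U ∈ 𝓝 0)
    (hf : DifferentiableOn ℂ f U) {T : ℂ → E} (hT : AnalyticAt ℂ T 0) (hT0 : T 0 = 0) {p : ℕ}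
    {b : ℂ → E →L[ℂ] F}
    (hb : ∀ᶠ ζ in 𝓝 0, fderiv ℂ f (ζ, T ζ) ∘L ContinuousLinearMap.inr ℂ ℂ E = ζ ^ p • b ζ)
    (hfT : (fun ζ => f (ζ, T ζ)) =O[𝓝 0] fun ζ => ζ ^ (2 * p + 2)) (y : E) :
    (fun ζ => f (ζ, T ζ + ζ ^ (p + 1) • y) - ζ ^ (2 * p + 1) • b ζ y) =O[𝓝 0]
      fun ζ => ζ ^ (2 * p + 2) := by
  have hTl : Tendsto T (𝓝 0) (𝓝 0) := hT0 ▸ hT.continuousAt.tendsto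
  have hy : Tendsto (fun ζ : ℂ => ζ ^ (p + 1) • y) (𝓝 0) (𝓝 0) :=
    Continuous.tendsto' (by fun_prop) _ _ (by simp)
  have htaylor := isBigO_comp_graph_sub_sub_fderiv hU hf le_rfl (by simpa using hTl.add hy) hTl
  have hpow : (fun ζ : ℂ => ‖T ζ + ζ ^ (p + 1) • y - T ζ‖ ^ 2) =O[𝓝 0]
      fun ζ => ζ ^ (2 * p + 2) := by
    refine Asymptotics.IsBigO.of_bound (‖y‖ ^ 2) (.of_forall fun ζ => le_of_eq ?_)
    rw [add_sub_cancel_left, norm_pow, norm_norm, norm_smul, norm_pow, norm_pow]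
    ring
  refine ((htaylor.trans hpow).add hfT).congr' ?_ .rfl
  filter_upwards [hb] with ζ hζ
  have hζy : fderiv ℂ f (ζ, T ζ) (0, ζ ^ (p + 1) • y) = ζ ^ (2 * p + 1) • b ζ y := by
    have h := congr($hζ (ζ ^ (p + 1) • y))
    rw [ContinuousLinearMap.comp_apply, ContinuousLinearMap.inr_apply] at h
    rw [h, smul_apply, map_smul, smul_smul]
    congr 1
    ring
  rw [add_sub_cancel_left, hζy]
  abel

theorem eq_of_isBigO_pow_smul_sub [l.NeBot] (hl : l ≤ 𝓝[≠] 0) {A B : ℂ → F}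
    (hA : ContinuousAt A 0) (hB : ContinuousAt B 0) {n : ℕ}
    (hAB : (fun ζ => ζ ^ n • A ζ - ζ ^ n • B ζ) =O[l] fun ζ => ζ ^ (n + 1)) : A 0 = B 0 := by
  have hl₀ : l ≤ 𝓝 0 := hl.trans nhdsWithin_le_nhds
  rw [add_comm] at hAB
  have h := tendsto_zero_of_isBigO_pow_succ (n := 0) hl₀ (isBigO_inv_pow_smul hl hAB)
  refine sub_eq_zero.mp (tendsto_nhds_unique ((hA.sub hB).tendsto.mono_left hl₀) (h.congr' ?_))
  filter_upwards [hl self_mem_nhdsWithin] with ζ hζ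
  rw [← smul_sub, inv_smul_smul₀ (pow_ne_zero n hζ)]
  rfl

theorem exists_blowUp [CompleteSpace E] [CompleteSpace F] {f : ℂ × E → F} {U : Set (ℂ × E)}
    (hU : U ∈ 𝓝 0) (hf : DifferentiableOn ℂ f U) {T : ℂ → E} (hT : AnalyticAt ℂ T 0)
    (hT0 : T 0 = 0) {p : ℕ} {b : ℂ → E →L[ℂ] F} (hbc : ContinuousAt b 0)
    (hb : ∀ᶠ ζ in 𝓝 0, fderiv ℂ f (ζ, T ζ) ∘L ContinuousLinearMap.inr ℂ ℂ E = ζ ^ p • b ζ)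
    (hfT : (fun ζ => f (ζ, T ζ)) =O[𝓝 0] fun ζ => ζ ^ (2 * p + 2)) :
    ∃ R > 0, ∃ Q : ℂ × E → F, DifferentiableOn ℂ Q (ball 0 R) ∧
      (∀ x ∈ ball 0 R, f (x.1, T x.1 + x.1 ^ (p + 1) • x.2) = x.1 ^ (2 * p + 1) • Q x) ∧
      ∀ y ∈ ball 0 R, Q (0, y) = b 0 y := by
  have hexp := isBigO_comp_graph_add_pow_smul_sub hU hf hT hT0 hb hfT
  have hby (y : E) : ContinuousAt (fun ζ => b ζ y) 0 := hbc.clm_apply continuousAt_const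
  set κ : ℂ × E → ℂ × E := fun x => (x.1, T x.1 + x.1 ^ (p + 1) • x.2)
  have hfκ (y : E) : (fun ζ => f (κ (ζ, y))) =O[𝓝[≠] 0] fun ζ => ζ ^ (2 * p + 1) := by
    have h := ((Asymptotics.isBigO_refl (fun ζ : ℂ => ζ ^ (2 * p + 1)) (𝓝 0)).smul
      ((hby y).isBigO_one ℂ)).congr_right fun ζ => mul_one _
    refine ((((hexp y).trans (pow_isBigO_pow_of_le le_rfl (2 * p + 1).le_succ)).add h).congr_left
      fun ζ => ?_).mono nhdsWithin_le_nhds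
    exact sub_add_cancel _ _
  have hκ : ∀ᶠ x in 𝓝 (0 : ℂ × E), DifferentiableAt ℂ κ x := by
    have hfst : Tendsto (fun x : ℂ × E => x.1) (𝓝 0) (𝓝 0) := continuous_fst.tendsto' _ _ rfl
    filter_upwards [hfst.eventually hT.eventually_analyticAt] with x hx
    have := hx.differentiableAt
    fun_prop
  have hκ0 : Tendsto κ (𝓝 0) (𝓝 0) := by
    have h : κ 0 = 0 := by simp [κ, hT0]
    simpa only [h] using hκ.self_of_nhds.continuousAt.tendsto
  obtain ⟨R, hR, hball⟩ := Metric.eventually_nhds_iff_ball.mp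
    (hκ.and (hκ0.eventually (eventually_mem_nhds_iff.mpr hU)))
  have hmem (y : E) (hy : ‖y‖ < R) : ((0 : ℂ), y) ∈ ball 0 R := by simpa using hy
  obtain ⟨Q, hQ, hfQ⟩ := exists_eq_pow_smul_of_isBigO (f := f ∘ κ) isOpen_ball
    (fun x hx => hmem x.2 ((norm_snd_le x).trans_lt (mem_ball_zero_iff.mp hx)))
    (fun x hx => ((hf.differentiableAt (hball x hx).2).comp x
      (hball x hx).1).differentiableWithinAt) (2 * p + 1) fun x _ => hfκ x.2
  refine ⟨R, hR, Q, hQ, hfQ, fun y hy => ?_⟩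
  have hy0 : ball 0 R ∈ 𝓝 ((0 : ℂ), y) := isOpen_ball.mem_nhds (hmem y (mem_ball_zero_iff.mp hy))
  have hy' : ContinuousAt (fun ζ : ℂ => (ζ, y)) 0 := by fun_prop
  refine eq_of_isBigO_pow_smul_sub le_rfl
    ((hQ.differentiableAt hy0).continuousAt.comp (f := fun ζ : ℂ => (ζ, y)) hy') (hby y)
    (((hexp y).mono nhdsWithin_le_nhds).congr' ?_ .rfl)
  filter_upwards [nhdsWithin_le_nhds (hy'.preimage_mem_nhds hy0)] with ζ hζ
  exact congrArg (· - _) (hfQ (ζ, y) hζ)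

end BlowUp

section Straightening

variable {𝕜 P E : Type*} [RCLike 𝕜] [NormedAddCommGroup P] [NormedSpace 𝕜 P]
  [NormedAddCommGroup E] [NormedSpace 𝕜 E]

theorem exists_equiv_prod_ker {L : P × E →L[𝕜] 𝕜}
    (hL : L ∘L ContinuousLinearMap.inr 𝕜 P E ≠ 0) :
    ∃ K : Submodule 𝕜 E, K ≠ ⊤ ∧ ∃ (π : E →L[𝕜] K) (e : (P × E) ≃L[𝕜] 𝕜 × P × K),
      ∀ x, e x = (L x, x.1, π x.2) := by
  set ℓ := L ∘L ContinuousLinearMap.inr 𝕜 P E with hℓ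
  obtain ⟨v, hv⟩ : ∃ v, ℓ v = 1 := by
    obtain ⟨w, hw⟩ := DFunLike.ne_iff.mp hL
    exact ⟨(ℓ w)⁻¹ • w, by rw [map_smul, smul_eq_mul, inv_mul_cancel₀ hw]⟩
  have hright : Function.RightInverse (ContinuousLinearMap.toSpanSingleton 𝕜 v) ℓ := fun c => by
    simp [hv]
  set π := ℓ.projKerOfRightInverse _ hright
  have hπ (y : E) : (π y : E) = y - ℓ y • v := rfl
  have hLx (x : P × E) : L x = L (x.1, 0) + ℓ x.2 := by
    rw [hℓ, ContinuousLinearMap.comp_apply, ← map_add]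
    simp
  refine ⟨ℓ.ker, fun htop => ?_, π, .equivOfInverse (L.prod (.prodMap (.id 𝕜 P) π))
    (.prod (.fst 𝕜 P ℓ.ker ∘L .snd 𝕜 𝕜 (P × ℓ.ker))
      (ℓ.ker.subtypeL ∘L .snd 𝕜 P ℓ.ker ∘L .snd 𝕜 𝕜 (P × ℓ.ker) +
        (.fst 𝕜 𝕜 (P × ℓ.ker) - L ∘L .inl 𝕜 P E ∘L .fst 𝕜 P ℓ.ker ∘L
          .snd 𝕜 𝕜 (P × ℓ.ker)).smulRight v)) (fun x => ?_) fun x => ?_, fun x => rfl⟩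
  · have : v ∈ ℓ.ker := htop ▸ Submodule.mem_top
    exact one_ne_zero (hv.symm.trans this)
  · refine Prod.ext rfl ?_
    simp [hπ, hLx x]
  · have hx : ℓ x.2.2 = 0 := x.2.2.2
    refine Prod.ext ?_ (Prod.ext rfl (Subtype.ext ?_))
    · exact (hLx _).trans (by simp [hx, hv])
    · simp [hπ, hx, hv]

theorem exists_contDiffAt_graph_sub_isBigO [CompleteSpace P] [CompleteSpace E] {Q : P × E → 𝕜}
    (hQ : ContDiffAt 𝕜 1 Q 0) (hQ0 : Q 0 = 0)
    (hQ' : fderiv 𝕜 Q 0 ∘L ContinuousLinearMap.inr 𝕜 P E ≠ 0) :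
    ∃ K : Submodule 𝕜 E, K ≠ ⊤ ∧ ∃ (π : E →L[𝕜] K) (k : P × K → E),
      ContDiffAt 𝕜 1 k 0 ∧ (fun x => k (x.1, π x.2) - x.2) =O[𝓝 0] Q := by
  obtain ⟨K, hK, π, e, he⟩ := exists_equiv_prod_ker hQ'
  set Φ : P × E → 𝕜 × P × K := fun x => (Q x, x.1, π x.2)
  have hΦ : ContDiffAt 𝕜 1 Φ 0 := hQ.prodMk (by fun_prop)
  have hΦ' : HasStrictFDerivAt Φ (e : P × E →L[𝕜] 𝕜 × P × K) 0 := by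
    refine ((hQ.hasStrictFDerivAt one_ne_zero).prodMk
      (ContinuousLinearMap.prodMap (.id 𝕜 P) π).hasStrictFDerivAt).congr_fderiv ?_
    ext x <;> simp [he]
  have hΦ0 : Φ 0 = 0 := by simp [Φ, hQ0]
  set Ψ := hΦ.localInverse hΦ'.hasFDerivAt one_ne_zero
  have hΨ : ContDiffAt 𝕜 1 Ψ 0 := hΦ0 ▸ hΦ.to_localInverse hΦ'.hasFDerivAt one_ne_zero
  refine ⟨K, hK, π, fun w => (Ψ (0, w)).2, ?_, ?_⟩
  · exact (ContDiffAt.comp (0 : P × K) (f := fun w => ((0 : 𝕜), w)) hΨ (by fun_prop)).snd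
  · have hΦl : Tendsto Φ (𝓝 0) (𝓝 0) := by simpa only [hΦ0] using hΦ.continuousAt.tendsto
    have hproj : Tendsto (fun x : P × E => ((0 : 𝕜), x.1, π x.2)) (𝓝 0) (𝓝 0) :=
      Continuous.tendsto' (by fun_prop) _ _ (by simp)
    have hO := (hΨ.hasStrictFDerivAt one_ne_zero).isBigO_sub.comp_tendsto (hproj.prodMk_nhds hΦl)
    refine .trans ?_ (hO.trans (Asymptotics.isBigO_of_le _ fun x => ?_))
    · refine .of_bound 1 ?_
      filter_upwards [hΦ'.eventually_left_inverse] with x hx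
      have hx : Ψ (Φ x) = x := hx
      rw [one_mul, Function.comp_apply, hx]
      exact norm_snd_le (Ψ (0, x.1, π x.2) - x)
    · simp [Φ]

end Straightening

section Artin

variable {E F : Type*} [NormedAddCommGroup E] [NormedSpace ℂ E] [NormedAddCommGroup F]
  {l : Filter ℂ}

theorem exists_isBigO_pow_and_not_isBigO_pow_succ {w : ℂ → F} (hw : w =O[l] fun _ => (1 : ℂ))
    (hflat : ¬FlatAlong l w) :
    ∃ p : ℕ, (w =O[l] fun ζ => ζ ^ p) ∧ ¬w =O[l] fun ζ => ζ ^ (p + 1) := by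
  by_contra! h
  refine hflat fun q => ?_
  induction q with
  | zero => simpa only [pow_zero] using hw
  | succ q ih => exact h q ih

variable [NormedSpace ℂ F]

theorem HasTaylorAlong.clm_comp {u : ℂ → E} (hu : HasTaylorAlong l u) (π : E →L[ℂ] F) :
    HasTaylorAlong l fun ζ => π (u ζ) := fun q => by
  obtain ⟨T, hT, hT0, hTu⟩ := hu q
  refine ⟨fun ζ => π (T ζ), π.analyticAt _ |>.comp hT, by simp [hT0], ?_⟩
  simpa only [map_sub] using (π.isBigO_comp (fun ζ => u ζ - T ζ) l).trans hTu

theorem HasTaylorAlong.inv_pow_smul_sub [l.NeBot] (hl : l ≤ 𝓝[≠] 0) {u T : ℂ → E}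
    (hu : HasTaylorAlong l u) (hT : AnalyticAt ℂ T 0) {m : ℕ}
    (hTu : (fun ζ => u ζ - T ζ) =O[l] fun ζ => ζ ^ (m + 1)) :
    HasTaylorAlong l fun ζ => (ζ ^ m)⁻¹ • (u ζ - T ζ) := fun q => by
  have hl₀ : l ≤ 𝓝 0 := hl.trans nhdsWithin_le_nhds
  obtain ⟨S, hS, -, hSu⟩ := hu (q + 1 + m)
  have hST : (S - T) =O[l] fun ζ => ζ ^ (m + 1) :=
    (hTu.sub (hSu.trans (pow_isBigO_pow_of_le hl₀ (by lia)))).congr_left fun ζ =>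
      sub_sub_sub_cancel_left _ _ _
  obtain ⟨g, hg, hgST⟩ := exists_analyticAt_eq_pow_smul_of_isBigO hl (hS.sub hT) hST
  refine ⟨fun ζ => ζ • g ζ, analyticAt_id.smul hg, zero_smul ℂ _,
    ((isBigO_inv_pow_smul hl hSu).trans (pow_isBigO_pow_of_le hl₀ q.le_succ)).congr' ?_ .rfl⟩
  filter_upwards [hl₀ hgST, hl self_mem_nhdsWithin] with ζ hζ hζ0
  have hg' : ζ • g ζ = (ζ ^ m)⁻¹ • (S ζ - T ζ) := by
    rw [eq_inv_smul_iff₀ (pow_ne_zero m hζ0), smul_smul, ← pow_succ]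
    exact hζ.symm
  rw [hg', ← smul_sub, sub_sub_sub_cancel_right]

variable [FiniteDimensional ℂ E]

theorem exists_blowUp_of_not_flatAlong [CompleteSpace F] [l.NeBot] (hl : l ≤ 𝓝[≠] 0)
    {f : ℂ × E → F} {ρ : ℝ} (hρ : 0 < ρ) (hf : DifferentiableOn ℂ f (ball 0 ρ)) {u : ℂ → E}
    (hu : HasTaylorAlong l u) (hflat : FlatAlong l fun ζ => f (ζ, u ζ))
    (hvert : ¬FlatAlong l fun ζ => fderiv ℂ f (ζ, u ζ) ∘L ContinuousLinearMap.inr ℂ ℂ E) :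
    ∃ (p : ℕ) (T : ℂ → E) (Q : ℂ × E → F), AnalyticAt ℂ T 0 ∧ T 0 = 0 ∧
      ((fun ζ => u ζ - T ζ) =O[l] fun ζ => ζ ^ (p + 2)) ∧ ContDiffAt ℂ 1 Q 0 ∧ Q 0 = 0 ∧
      fderiv ℂ Q 0 ∘L ContinuousLinearMap.inr ℂ ℂ E ≠ 0 ∧
      ∀ᶠ x in 𝓝 0, f (x.1, T x.1 + x.1 ^ (p + 1) • x.2) = x.1 ^ (2 * p + 1) • Q x := by
  have hl₀ : l ≤ 𝓝 0 := hl.trans nhdsWithin_le_nhds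
  have : CompleteSpace E := FiniteDimensional.complete ℂ E
  have hu0 := hu.tendsto_zero hl₀
  have hf2 : ContDiffAt ℂ 2 f 0 := contDiffAt_zero_of_differentiableOn_ball hρ hf 2
  have hg : ContDiffAt ℂ 1 (fun x => fderiv ℂ f x ∘L ContinuousLinearMap.inr ℂ ℂ E) 0 :=
    (hf2.fderiv_right (m := 1) (by norm_num)).clm_comp contDiffAt_const
  obtain ⟨p, hp, hp'⟩ := exists_isBigO_pow_and_not_isBigO_pow_succ
    ((hg.continuousAt.isBigO_one ℂ).comp_tendsto (tendsto_prodMk_id hl₀ hu0)) hvert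
  obtain ⟨T, hT, hT0, hTu⟩ := hu (2 * p + 2)
  obtain ⟨b, hb, hb0, hbT⟩ := exists_analyticAt_comp_graph_eq_pow_smul hl hg hu0 hT hT0
    (hTu.trans (pow_isBigO_pow_of_le hl₀ (by lia))) hp hp'
  have hfT : (fun ζ => f (ζ, T ζ)) =O[𝓝 0] fun ζ => ζ ^ (2 * p + 2) := by
    have hsub := isBigO_comp_graph_sub (hf2.hasStrictFDerivAt two_ne_zero) hl₀ hu0
      ((hT0 ▸ hT.continuousAt.tendsto).mono_left hl₀)
    have hO := ((hflat (2 * p + 2)).sub (hsub.trans hTu)).congr_left fun ζ => sub_sub_cancel _ _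
    obtain ⟨g, hg, hfg⟩ := exists_analyticAt_eq_pow_smul_of_isBigO hl (analyticAt_comp_graph
      ((hf2.eventually (by simp)).mono fun x hx => hx.differentiableAt two_ne_zero) hT hT0) hO
    exact isBigO_pow_of_eventuallyEq_pow_smul hg.continuousAt hfg
  obtain ⟨R, hR, Q, hQ, hfQ, hQb⟩ :=
    exists_blowUp (ball_mem_nhds 0 hρ) hf hT hT0 hb.continuousAt hbT hfT
  have hQ' : fderiv ℂ Q 0 ∘L ContinuousLinearMap.inr ℂ ℂ E = b 0 := by
    have hQd : HasFDerivAt Q (fderiv ℂ Q 0) ((0 : ℂ), (0 : E)) :=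
      (hQ.differentiableAt (ball_mem_nhds 0 hR)).hasFDerivAt
    refine (hQd.comp (0 : E) (hasFDerivAt_prodMk_right 0 0)).unique
      ((b 0).hasFDerivAt.congr_of_eventuallyEq ?_)
    filter_upwards [ball_mem_nhds 0 hR] with y hy using hQb y hy
  exact ⟨p, T, Q, hT, hT0, hTu.trans (pow_isBigO_pow_of_le hl₀ (by lia)),
    contDiffAt_zero_of_differentiableOn_ball hR hQ 1,
    (hQb 0 (mem_ball_self hR)).trans (map_zero _), hQ' ▸ hb0,
    (eventually_mem_nhds_iff.mpr (ball_mem_nhds 0 hR)).mono fun x hx => hfQ x (mem_of_mem_nhds hx)⟩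

theorem exists_finrank_lt_of_not_flatAlong [l.NeBot] (hl : l ≤ 𝓝[≠] 0) {f : ℂ × E → ℂ} {ρ : ℝ}
    (hρ : 0 < ρ) (hf : DifferentiableOn ℂ f (ball 0 ρ)) {u : ℂ → E} (hu : HasTaylorAlong l u)
    (hflat : FlatAlong l fun ζ => f (ζ, u ζ))
    (hvert : ¬FlatAlong l fun ζ => fderiv ℂ f (ζ, u ζ) ∘L ContinuousLinearMap.inr ℂ ℂ E) :
    ∃ K : Submodule ℂ E, Module.finrank ℂ K < Module.finrank ℂ E ∧
      ∃ (k : ℂ × K → E) (û : ℂ → K), ContDiffAt ℂ 1 k 0 ∧ k 0 = 0 ∧ HasTaylorAlong l û ∧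
        FlatAlong l fun ζ => k (ζ, û ζ) - u ζ := by
  have hl₀ : l ≤ 𝓝 0 := hl.trans nhdsWithin_le_nhds
  have : CompleteSpace E := FiniteDimensional.complete ℂ E
  obtain ⟨p, T, Q, hT, hT0, hTu, hQ, hQ0, hQ', hfQ⟩ :=
    exists_blowUp_of_not_flatAlong hl hρ hf hu hflat hvert
  obtain ⟨K, hK, π, k, hk, hkQ⟩ := exists_contDiffAt_graph_sub_isBigO hQ hQ0 hQ'
  set y : ℂ → E := fun ζ => (ζ ^ (p + 1))⁻¹ • (u ζ - T ζ)
  have hy : HasTaylorAlong l y := hu.inv_pow_smul_sub hl hT hTu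
  have hyl := tendsto_prodMk_id hl₀ (hy.tendsto_zero hl₀)
  have hu_eq : ∀ᶠ ζ in l, T ζ + ζ ^ (p + 1) • y ζ = u ζ := by
    filter_upwards [hl self_mem_nhdsWithin] with ζ hζ
    rw [smul_inv_smul₀ (pow_ne_zero _ hζ), add_sub_cancel]
  have hQy : FlatAlong l fun ζ => Q (ζ, y ζ) := fun q => by
    refine (isBigO_inv_pow_smul hl (hflat (q + (2 * p + 1)))).congr' ?_ .rfl
    filter_upwards [hl self_mem_nhdsWithin, hu_eq, hyl.eventually hfQ] with ζ hζ hζu hζQ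
    rw [← inv_smul_smul₀ (pow_ne_zero (2 * p + 1) hζ) (Q (ζ, y ζ)), ← hζQ, hζu]
  refine ⟨K, Submodule.finrank_lt hK, fun x => T x.1 + x.1 ^ (p + 1) • k x, fun ζ => π (y ζ),
    ?_, by simp [hT0], hy.clm_comp π, fun q => ?_⟩
  · have hT1 : ContDiffAt ℂ 1 (fun x : ℂ × K => T x.1) 0 :=
      hT.contDiffAt.comp (0 : ℂ × K) contDiffAt_fst
    exact hT1.add ((contDiffAt_fst.pow _).smul hk)
  · have hpow : (fun ζ : ℂ => ζ ^ (p + 1)) =O[l] fun _ => (1 : ℂ) :=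
      ((continuous_pow (p + 1)).continuousAt.isBigO_one ℂ).mono hl₀
    refine ((hpow.smul ((hkQ.comp_tendsto hyl).trans (hQy q))).congr' ?_ (.of_forall fun ζ => ?_))
    · filter_upwards [hu_eq] with ζ hζ
      rw [← hζ, add_sub_add_left_eq_sub, ← smul_sub]
      rfl
    · simp

theorem eventually_exists_forall_eq_zero [l.NeBot] (hl : l ≤ 𝓝[≠] 0) {ι : Type*}
    {f : ι → ℂ × E → ℂ} {ρ : ℝ} (hρ : 0 < ρ) (hf : ∀ i, DifferentiableOn ℂ (f i) (ball 0 ρ))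
    {u : ℂ → E} (hu : HasTaylorAlong l u) (hflat : ∀ i, FlatAlong l fun ζ => f i (ζ, u ζ)) :
    ∀ᶠ ζ in 𝓝 (0 : ℂ), ∃ y : E, (ζ, y) ∈ ball 0 ρ ∧ ∀ i, f i (ζ, y) = 0 := by
  have hl₀ : l ≤ 𝓝 0 := hl.trans nhdsWithin_le_nhds
  induction hN : Module.finrank ℂ E using Nat.strong_induction_on generalizing E ρ with
  | _ N ih =>
  by_cases hclosed : FlatVerticalClosed ℂ l u ρ
  · filter_upwards [ball_mem_nhds 0 hρ] with ζ hζ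
    have hζ0 : (ζ, (0 : E)) ∈ ball 0 ρ := by simpa using hζ
    exact ⟨0, hζ0, fun i => hclosed.eq_zero hl hu (hf i) (hflat i) hζ0⟩
  · simp only [FlatVerticalClosed, not_forall] at hclosed
    obtain ⟨f₀, hf₀, hflat₀, hvert⟩ := hclosed
    obtain ⟨K, hKE, k, û, hk, hk0, hû, hku⟩ :=
      exists_finrank_lt_of_not_flatAlong hl hρ hf₀ hu hflat₀ hvert
    have hκ : Tendsto (fun x : ℂ × K => (x.1, k x)) (𝓝 0) (𝓝 0) := by
      have h := (continuousAt_fst.prodMk hk.continuousAt).tendsto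
      rwa [hk0] at h
    have hkd : ∀ᶠ x in 𝓝 0, DifferentiableAt ℂ k x :=
      (hk.eventually (by simp)).mono fun x hx => hx.differentiableAt one_ne_zero
    obtain ⟨ρ', hρ', hball⟩ := Metric.eventually_nhds_iff_ball.mp
      (hkd.and (hκ.eventually (ball_mem_nhds 0 hρ)))
    have hku0 : Tendsto (fun ζ => k (ζ, û ζ)) l (𝓝 0) :=
      (continuous_snd.tendsto' 0 0 rfl).comp (hκ.comp (tendsto_prodMk_id hl₀ (hû.tendsto_zero hl₀)))
    filter_upwards [ih _ (hN ▸ hKE) (f := fun i x => f i (x.1, k x)) hρ'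
      (fun i x hx => (((hf i).differentiableAt (isOpen_ball.mem_nhds (hball x hx).2)).comp x
        (differentiableAt_fst.prodMk (hball x hx).1)).differentiableWithinAt) hû
      (fun i => FlatAlong.comp_graph
        ((contDiffAt_zero_of_differentiableOn_ball hρ (hf i) 1).hasStrictFDerivAt one_ne_zero)
        hl₀ hku0 (hu.tendsto_zero hl₀) hku (hflat i)) rfl] with ζ ⟨y, hy, hfy⟩
    exact ⟨k (ζ, y), (hball _ hy).2, hfy⟩

end Artin

section Complexification

variable {κ F : Type*}

/-- The inclusion `ℝ^κ → ℂ^κ` of the real points, as a real-linear map. -/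
def ofRealPi (κ : Type*) : (κ → ℝ) →L[ℝ] (κ → ℂ) :=
  ContinuousLinearMap.pi fun i => ofRealCLM.comp (ContinuousLinearMap.proj i)

theorem ofRealPi_apply (x : κ → ℝ) (i : κ) : ofRealPi κ x i = x i := rfl

theorem norm_ofRealPi [Fintype κ] (x : κ → ℝ) : ‖ofRealPi κ x‖ = ‖x‖ := by
  simp [Pi.norm_def, ofRealPi_apply, nnnorm]

theorem ofReal_smul_ofRealPi (s : ℝ) (x : κ → ℝ) :
    (s : ℂ) • ofRealPi κ x = ofRealPi κ (s • x) := by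
  rw [Complex.coe_smul, map_smul]

theorem ofRealPi_single [DecidableEq κ] (i : κ) :
    ofRealPi κ (Pi.single i 1) = Pi.single i 1 := by
  funext j
  simp [ofRealPi_apply, Pi.single_apply, apply_ite]

variable [Fintype κ] [NormedAddCommGroup F] [NormedSpace ℂ F]

/-- The complexification of a formal multilinear series on `ℝ^κ` with values in a complex space:
the series on `ℂ^κ` with the same coefficients in the standard coordinates. -/
def complexify [DecidableEq κ] (p : FormalMultilinearSeries ℝ (κ → ℝ) F) :
    FormalMultilinearSeries ℂ (κ → ℂ) F := fun k =>
  ∑ J : Fin k → κ, ((ContinuousMultilinearMap.mkPiAlgebra ℂ (Fin k) ℂ).compContinuousLinearMap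
    fun i => ContinuousLinearMap.proj (R := ℂ) (φ := fun _ : κ => ℂ) (J i)).smulRight
      (p k fun i => Pi.single (J i) 1)

theorem complexify_apply [DecidableEq κ] (p : FormalMultilinearSeries ℝ (κ → ℝ) F) (k : ℕ)
    (v : Fin k → κ → ℂ) :
    complexify p k v = ∑ J : Fin k → κ, (∏ i, v i (J i)) • p k fun i => Pi.single (J i) 1 := by
  simp [complexify]

theorem complexify_ofRealPi [DecidableEq κ] (p : FormalMultilinearSeries ℝ (κ → ℝ) F) (k : ℕ)
    (v : Fin k → κ → ℝ) : (complexify p k fun i => ofRealPi κ (v i)) = p k v := by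
  have hv : v = fun i => ∑ j, v i j • Pi.single j (1 : ℝ) := funext fun i => pi_eq_sum_univ' (v i)
  rw [complexify_apply]
  conv_rhs => rw [hv, (p k).map_sum]
  refine Finset.sum_congr rfl fun J _ => ?_
  rw [(p k).map_smul_univ, ← Complex.coe_smul, ofReal_prod]
  rfl

theorem norm_complexify_le [DecidableEq κ] (p : FormalMultilinearSeries ℝ (κ → ℝ) F) (k : ℕ) :
    ‖complexify p k‖ ≤ (Fintype.card κ : ℝ) ^ k * ‖p k‖ := by
  refine ContinuousMultilinearMap.opNorm_le_bound (by positivity) fun v => ?_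
  have hterm (J : Fin k → κ) :
      ‖(∏ i, v i (J i)) • p k fun i => Pi.single (J i) 1‖ ≤ ‖p k‖ * ∏ i, ‖v i‖ := by
    have hp : ‖p k fun i => Pi.single (J i) 1‖ ≤ ‖p k‖ := by
      simpa [Pi.norm_single] using (p k).le_opNorm fun i => Pi.single (J i) (1 : ℝ)
    rw [norm_smul, norm_prod, mul_comm]
    gcongr with i
    exact norm_le_pi_norm (v i) (J i)
  rw [complexify_apply]
  refine (norm_sum_le _ _).trans ((Finset.sum_le_sum fun J _ => hterm J).trans_eq ?_)
  simp [mul_assoc]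

theorem complexify_radius_pos [DecidableEq κ] {p : FormalMultilinearSeries ℝ (κ → ℝ) F}
    (hp : 0 < p.radius) :
    0 < (complexify p).radius := by
  obtain ⟨C, a, hC, ha, hCa⟩ := p.le_mul_pow_of_radius_pos hp
  have hD : 0 < (Fintype.card κ * a + 1 : ℝ) := by positivity
  lift (Fintype.card κ * a + 1 : ℝ)⁻¹ to NNReal using by positivity with t ht
  have ht0 : 0 < t := by rw [← NNReal.coe_pos, ht]; positivity
  refine (ENNReal.coe_pos.mpr ht0).trans_le ((complexify p).le_radius_of_bound C fun k => ?_)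
  have hat : Fintype.card κ * a * (t : ℝ) ≤ 1 := by
    rw [ht, ← div_eq_mul_inv, div_le_one hD]
    linarith
  calc ‖complexify p k‖ * (t : ℝ) ^ k
      ≤ (Fintype.card κ : ℝ) ^ k * (C * a ^ k) * (t : ℝ) ^ k := by
        gcongr
        exact (norm_complexify_le p k).trans (by gcongr; exact hCa k)
    _ = C * (Fintype.card κ * a * t) ^ k := by ring
    _ ≤ C := mul_le_of_le_one_right hC.le (pow_le_one₀ (by positivity) hat)

theorem exists_analyticAt_eventually_ofRealPi_eq [CompleteSpace F] {f : (κ → ℝ) → F}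
    (hf : AnalyticAt ℝ f 0) :
    ∃ g : (κ → ℂ) → F, AnalyticAt ℂ g 0 ∧ ∀ᶠ x in 𝓝 0, g (ofRealPi κ x) = f x := by
  classical
  obtain ⟨p, r, hp⟩ := hf
  have hrad := complexify_radius_pos (hp.r_pos.trans_le hp.r_le)
  have hq := (complexify p).hasFPowerSeriesOnBall hrad
  have hcast : Tendsto (ofRealPi κ) (𝓝 0) (𝓝 0) := (ofRealPi κ).continuous.tendsto' _ _ (map_zero _)
  refine ⟨_, hq.analyticAt, ?_⟩
  filter_upwards [Metric.eball_mem_nhds 0 hp.r_pos, hcast (Metric.eball_mem_nhds 0 hrad)]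
    with x hx hxq
  have hsum := hq.hasSum hxq
  simp only [zero_add, complexify_ofRealPi] at hsum
  exact hsum.unique (by simpa only [zero_add] using hp.hasSum hx)

end Complexification

section Baire

theorem exists_isOpen_eventually_forall_mem {X Z : Type*} [TopologicalSpace X] [BaireSpace X]
    [Nonempty X] {l : Filter Z} [l.IsCountablyGenerated] {P : Z → X → Prop}
    (hP : ∀ ζ, IsClosed {a | P ζ a}) (H : ∀ a, ∀ᶠ ζ in l, P ζ a) :
    ∃ U : Set X, IsOpen U ∧ U.Nonempty ∧ ∀ᶠ ζ in l, ∀ a ∈ U, P ζ a := by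
  obtain ⟨s, hs⟩ := l.exists_antitone_basis
  have hclosed (k : ℕ) : IsClosed {a | ∀ ζ ∈ s k, P ζ a} := by
    simpa only [ofPred_forall] using isClosed_biInter fun ζ _ => hP ζ
  have hcover : ⋃ k, {a | ∀ ζ ∈ s k, P ζ a} = univ := eq_univ_of_forall fun a =>
    let ⟨k, hk⟩ := hs.mem_iff.mp (H a)
    mem_iUnion.mpr ⟨k, hk⟩
  obtain ⟨k, hk⟩ := nonempty_interior_of_iUnion_of_closed hclosed hcover
  exact ⟨_, isOpen_interior, hk,
    mem_of_superset (hs.mem k) fun ζ hζ a ha => interior_subset ha ζ hζ⟩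

theorem isClosed_setOf_mem_imp_norm_le {X F : Type*} [TopologicalSpace X]
    [SeminormedAddCommGroup F] {f : X → F} {U : Set X} (hU : IsOpen U) (hf : ContinuousOn f U)
    (B : ℝ) : IsClosed {x | x ∈ U → ‖f x‖ ≤ B} := by
  have hopen := hf.norm.isOpen_inter_preimage hU (isOpen_Ioi (a := B))
  convert hopen.isClosed_compl using 1
  ext x
  simp

variable {κ ι F : Type*} [Fintype κ] [NormedAddCommGroup F]

open scoped Pointwise in
theorem exists_ball_forall_norm_comp_smul_ofRealPi_le {f : ι → (κ → ℂ) → F} {R : ℝ} (hR : 0 < R)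
    {B : ι → ℝ} (hf : ∀ i, ContinuousOn (f i) (ball 0 R))
    (H : ∀ a : κ → ℝ, ∀ᶠ ζ in 𝓝 (0 : ℂ), ∀ i, ‖f i (ζ • ofRealPi κ a)‖ ≤ B i) :
    ∃ (a : κ → ℝ) (δ : ℝ), 0 < δ ∧ ‖a‖ + δ ≤ R ∧
      ∀ x ∈ ball a δ, ∀ ζ : ℂ, ‖ζ‖ ≤ 1 → ∀ i, ‖f i (ζ • ofRealPi κ x)‖ ≤ B i := by
  obtain ⟨U, hU, ⟨a, ha⟩, hbound⟩ := exists_isOpen_eventually_forall_mem (l := 𝓝 (0 : ℂ))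
    (P := fun ζ x => ∀ i, ζ • ofRealPi κ x ∈ ball 0 R → ‖f i (ζ • ofRealPi κ x)‖ ≤ B i)
    (fun ζ => by
      have hclosed (i : ι) := (isClosed_setOf_mem_imp_norm_le isOpen_ball (hf i) (B i)).preimage
        ((ofRealPi κ).continuous.const_smul ζ)
      rw [ofPred_forall]
      exact isClosed_iInter hclosed)
    fun a => (H a).mono fun ζ hζ i _ => hζ i
  obtain ⟨δ, hδ, hδU⟩ := Metric.isOpen_iff.mp hU a ha
  obtain ⟨s, hs, hsb⟩ := Metric.eventually_nhds_iff_ball.mp hbound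
  obtain ⟨ξ, hξR, hξs, hξ⟩ : ∃ ξ : ℝ, ξ * (‖a‖ + δ) < R ∧ ξ < s ∧ 0 < ξ := by
    have htends : Tendsto (fun ξ : ℝ => ξ * (‖a‖ + δ)) (𝓝[>] 0) (𝓝 0) :=
      ((continuous_mul_const _).tendsto' _ _ (zero_mul _)).mono_left nhdsWithin_le_nhds
    exact ((htends.eventually_lt_const hR).and
      ((eventually_nhdsWithin_of_eventually_nhds (eventually_lt_nhds hs)).and
        self_mem_nhdsWithin)).exists
  have hnorm : ‖ξ • a‖ + ξ * δ < R := by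
    rwa [norm_smul, Real.norm_of_nonneg hξ.le, ← mul_add]
  refine ⟨ξ • a, ξ * δ, by positivity, hnorm.le, fun x hx ζ hζ i => ?_⟩
  have hball : ζ • ofRealPi κ x ∈ ball 0 R := by
    rw [mem_ball_zero_iff, norm_smul, norm_ofRealPi]
    refine (mul_le_of_le_one_left (norm_nonneg x) hζ).trans_lt (lt_trans ?_ hnorm)
    linarith [norm_le_norm_add_norm_sub' x (ξ • a), mem_ball_iff_norm.mp hx]
  have hscale : ball (ξ • a) (ξ * δ) = ξ • ball a δ := by
    rw [_root_.smul_ball hξ.ne', Real.norm_of_nonneg hξ.le]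
  obtain ⟨y, hy, rfl⟩ := hscale ▸ hx
  have hsmul : ζ • ofRealPi κ (ξ • y) = (ζ * ξ) • ofRealPi κ y := by
    rw [mul_smul, ofReal_smul_ofRealPi]
  simp only [hsmul] at hball ⊢
  refine hsb (ζ * ξ) ?_ y (hδU hy) i hball
  rw [mem_ball_zero_iff, norm_mul, norm_real, Real.norm_of_nonneg hξ.le]
  exact (mul_le_of_le_one_left hξ.le hζ).trans_lt hξs

end Baire

section AnalyticDisc

theorem sq_add_one_div_two_of_norm_eq_one {η : ℂ} (hη : ‖η‖ = 1) : (η ^ 2 + 1) / 2 = η * η.re := by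
  have hconj : η * starRingEnd ℂ η = 1 := by simp [mul_conj', hη]
  rw [re_eq_add_conj]
  linear_combination (-1 / 2 : ℂ) * hconj

theorem sq_sub_one_div_two_mul_I_of_norm_eq_one {η : ℂ} (hη : ‖η‖ = 1) :
    (η ^ 2 - 1) / (2 * I) = η * η.im := by
  have hconj : η * starRingEnd ℂ η = 1 := by simp [mul_conj', hη]
  rw [im_eq_sub_conj]
  linear_combination (1 / (2 * I)) * hconj

variable {κ F : Type*}

/-- The analytic disc in `ℂ^κ` with centre `(b + ic) / 2` whose value at each point `η` of the unit
circle is `η` times the real point `a + (Re η) b + (Im η) c`. It propagates bounds from complex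
lines through real points to a full neighbourhood of the origin. -/
def realLineDisc (a b c : κ → ℝ) (η : ℂ) : κ → ℂ :=
  η • ofRealPi κ a + ((η ^ 2 + 1) / 2) • ofRealPi κ b + ((η ^ 2 - 1) / (2 * I)) • ofRealPi κ c

theorem realLineDisc_of_norm_eq_one (a b c : κ → ℝ) {η : ℂ} (hη : ‖η‖ = 1) :
    realLineDisc a b c η = η • ofRealPi κ (a + η.re • b + η.im • c) := by
  rw [realLineDisc, sq_add_one_div_two_of_norm_eq_one hη,
    sq_sub_one_div_two_mul_I_of_norm_eq_one hη, map_add, map_add, ← ofReal_smul_ofRealPi,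
    ← ofReal_smul_ofRealPi, smul_add, smul_add, mul_smul, mul_smul]

theorem realLineDisc_re_im_zero (a : κ → ℝ) (w : κ → ℂ) :
    realLineDisc a (fun i => (w i).re) (fun i => (w i).im) 0 = (1 / 2 : ℂ) • w := by
  funext i
  have hI : ((0 : ℂ) ^ 2 - 1) / (2 * I) = I / 2 := by
    rw [div_eq_iff (by simp)]
    linear_combination (-1 : ℂ) * I_sq
  conv_rhs => rw [Pi.smul_apply, ← re_add_im (w i)]
  simp only [realLineDisc, hI, Pi.add_apply, Pi.smul_apply, ofRealPi_apply, smul_eq_mul]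
  ring

theorem differentiable_realLineDisc [Finite κ] (a b c : κ → ℝ) :
    Differentiable ℂ (realLineDisc a b c) := by
  cases nonempty_fintype κ
  unfold realLineDisc
  fun_prop

variable [Fintype κ]

theorem norm_realLineDisc_le (a b c : κ → ℝ) {η : ℂ} (hη : ‖η‖ ≤ 1) :
    ‖realLineDisc a b c η‖ ≤ ‖a‖ + ‖b‖ + ‖c‖ := by
  have hsq : ‖η ^ 2‖ ≤ 1 := norm_pow η 2 ▸ pow_le_one₀ (norm_nonneg η) hη
  have hb : ‖(η ^ 2 + 1) / 2‖ ≤ 1 := by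
    rw [norm_div, norm_ofNat, div_le_one two_pos]
    linarith [norm_add_le (η ^ 2) 1, norm_one (α := ℂ)]
  have hc : ‖(η ^ 2 - 1) / (2 * I)‖ ≤ 1 := by
    rw [norm_div, norm_mul, norm_ofNat, norm_I, mul_one, div_le_one two_pos]
    linarith [norm_sub_le (η ^ 2) 1, norm_one (α := ℂ)]
  refine norm_add₃_le.trans ?_
  simp only [norm_smul, norm_ofRealPi]
  gcongr <;> exact mul_le_of_le_one_left (norm_nonneg _) ‹_›

theorem norm_le_of_forall_norm_smul_ofRealPi_le [NormedAddCommGroup F] [NormedSpace ℂ F]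
    {f : (κ → ℂ) → F} {a : κ → ℝ} {R δ B : ℝ} (hf : DifferentiableOn ℂ f (ball 0 R))
    (haR : ‖a‖ + δ ≤ R)
    (hfB : ∀ x ∈ ball a δ, ∀ ζ : ℂ, ‖ζ‖ = 1 → ‖f (ζ • ofRealPi κ x)‖ ≤ B) {z : κ → ℂ}
    (hz : z ∈ ball 0 (δ / 4)) : ‖f z‖ ≤ B := by
  set b : κ → ℝ := fun i => (((2 : ℂ) • z) i).re with hb
  set c : κ → ℝ := fun i => (((2 : ℂ) • z) i).im with hc
  have hz2 : ‖(2 : ℂ) • z‖ < δ / 2 := by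
    rw [mem_ball_zero_iff] at hz
    rw [norm_smul, norm_ofNat]
    linarith
  have hbδ : ‖b‖ < δ / 2 := ((pi_norm_le_iff_of_nonneg (norm_nonneg _)).mpr fun i =>
    (abs_re_le_norm _).trans (norm_le_pi_norm ((2 : ℂ) • z) i)).trans_lt hz2
  have hcδ : ‖c‖ < δ / 2 := ((pi_norm_le_iff_of_nonneg (norm_nonneg _)).mpr fun i =>
    (abs_im_le_norm _).trans (norm_le_pi_norm ((2 : ℂ) • z) i)).trans_lt hz2
  have hmaps : MapsTo (realLineDisc a b c) (closure (ball 0 1)) (ball 0 R) := fun η hη => by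
    rw [closure_ball 0 one_ne_zero, mem_closedBall_zero_iff] at hη
    rw [mem_ball_zero_iff]
    linarith [norm_realLineDisc_le a b c hη]
  have hboundary : ∀ η ∈ frontier (ball (0 : ℂ) 1), ‖f (realLineDisc a b c η)‖ ≤ B := fun η hη => by
    rw [frontier_ball 0 one_ne_zero, mem_sphere_zero_iff_norm] at hη
    rw [realLineDisc_of_norm_eq_one a b c hη]
    refine hfB _ ?_ η hη
    rw [mem_ball_iff_norm, add_assoc, add_sub_cancel_left]
    calc ‖η.re • b + η.im • c‖ ≤ 1 * ‖b‖ + 1 * ‖c‖ := norm_add_le_of_le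
          ((norm_smul_le _ _).trans (by gcongr; exact hη ▸ abs_re_le_norm η))
          ((norm_smul_le _ _).trans (by gcongr; exact hη ▸ abs_im_le_norm η))
      _ < δ := by linarith
  have hdiff := (hf.comp (differentiable_realLineDisc a b c).differentiableOn hmaps).diffContOnCl
  have hcentre := norm_le_of_forall_mem_frontier_norm_le isBounded_ball hdiff hboundary
    (subset_closure (mem_ball_self one_pos))
  have hz0 : realLineDisc a b c 0 = z := by
    rw [hb, hc, realLineDisc_re_im_zero, smul_smul, one_div_mul_cancel two_ne_zero, one_smul]
  rwa [Function.comp_apply, hz0] at hcentre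

theorem exists_ball_forall_norm_le [NormedAddCommGroup F] [NormedSpace ℂ F] {ι : Type*}
    {f : ι → (κ → ℂ) → F} {R : ℝ} (hR : 0 < R) {B : ι → ℝ}
    (hf : ∀ i, DifferentiableOn ℂ (f i) (ball 0 R))
    (H : ∀ a : κ → ℝ, ∀ᶠ ζ in 𝓝 (0 : ℂ), ∀ i, ‖f i (ζ • ofRealPi κ a)‖ ≤ B i) :
    ∃ ε > 0, ∀ i, ∀ z ∈ ball 0 ε, ‖f i z‖ ≤ B i := by
  obtain ⟨a, δ, hδ, haR, hfB⟩ :=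
    exists_ball_forall_norm_comp_smul_ofRealPi_le hR (fun i => (hf i).continuousOn) H
  exact ⟨δ / 4, by positivity, fun i z hz =>
    norm_le_of_forall_norm_smul_ofRealPi_le (hf i) haR (fun x hx ζ hζ => hfB x hx ζ hζ.le i) hz⟩

end AnalyticDisc

section Parametrization

theorem exists_analyticAt_implicit {P : Type*} [NormedAddCommGroup P] [NormedSpace ℝ P]
    [CompleteSpace P] {Q : P × ℝ → ℝ} {Q' : P × ℝ →L[ℝ] ℝ} (hQ : AnalyticAt ℝ Q 0)
    (hQ0 : Q 0 = 0) (hQ' : HasFDerivAt Q Q' 0) (hinl : Q' ∘L .inl ℝ P ℝ = 0)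
    (hinr : Q' (0, 1) ≠ 0) :
    ∃ F : P → ℝ, AnalyticAt ℝ F 0 ∧ F 0 = 0 ∧ HasFDerivAt F (0 : P →L[ℝ] ℝ) 0 ∧
      ∀ᶠ x in 𝓝 0, Q (x, F x) = 0 := by
  rw [← hQ'.fderiv] at hinl hinr
  have hcd : ContDiffAt ℝ (⊤ : WithTop ℕ∞) Q 0 := hQ.contDiffAt
  have htop : (⊤ : WithTop ℕ∞) ≠ 0 := WithTop.top_ne_zero
  have hinv : (fderiv ℝ Q 0 ∘L .inr ℝ P ℝ).IsInvertible :=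
    ⟨.unitsEquivAut ℝ (.mk0 _ hinr), by ext; simp⟩
  refine ⟨hcd.implicitFunction htop hinv, (hcd.contDiffAt_implicitFunction htop hinv).analyticAt,
    hcd.implicitFunction_apply_self htop hinv, ?_, ?_⟩
  · have hF := (hcd.hasStrictFDerivAt_implicitFunction htop hinv).hasFDerivAt
    rwa [hinl, ContinuousLinearMap.comp_zero, neg_zero] at hF
  · simpa [hQ0] using hcd.eventually_apply_implicitFunction htop hinv

theorem hasFDerivAt_zero_of_comp_ofRealPi {κ F : Type*} [Finite κ] [NormedAddCommGroup F]
    [NormedSpace ℂ F] {g : (κ → ℂ) → F} {f : (κ → ℝ) → F} (hg : DifferentiableAt ℂ g 0)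
    (hgf : ∀ᶠ x in 𝓝 0, g (ofRealPi κ x) = f x) (hf : HasFDerivAt f (0 : (κ → ℝ) →L[ℝ] F) 0) :
    HasFDerivAt g (0 : (κ → ℂ) →L[ℂ] F) 0 := by
  classical
  cases nonempty_fintype κ
  have hcomp : HasFDerivAt (fun x => g (ofRealPi κ x))
      ((fderiv ℂ g 0).restrictScalars ℝ ∘L ofRealPi κ) 0 := by
    refine HasFDerivAt.comp (0 : κ → ℝ) (f := ofRealPi κ) ?_ (ofRealPi κ).hasFDerivAt
    rw [map_zero]
    exact hg.hasFDerivAt.restrictScalars ℝ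
  have hreal := (hf.congr_of_eventuallyEq hgf).unique hcomp
  have hsingle (i : κ) : fderiv ℂ g 0 (Pi.single i 1) = 0 := by
    rw [← ofRealPi_single]
    exact (DFunLike.congr_fun hreal (Pi.single i 1)).symm
  have hzero : fderiv ℂ g 0 = 0 := by
    ext v
    rw [pi_eq_sum_univ' v, map_sum]
    exact Finset.sum_eq_zero fun i _ => by rw [map_smul, hsingle i, smul_zero]
  exact hzero ▸ hg.hasFDerivAt

variable {V : Type*} [NormedAddCommGroup V] [NormedSpace ℂ V]

theorem exists_ne_zero_map_smul_eq_zero (ℓ : V →L[ℝ] ℝ) (v : V) :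
    ∃ c : ℂ, c ≠ 0 ∧ ℓ (c • v) = 0 := by
  by_cases hv : ℓ v = 0
  · exact ⟨1, one_ne_zero, by rwa [one_smul]⟩
  · refine ⟨(ℓ (I • v) : ℂ) - (ℓ v : ℂ) * I, fun hc => hv (by simpa using congrArg im hc), ?_⟩
    rw [sub_smul, mul_smul, map_sub, Complex.coe_smul, Complex.coe_smul, ℓ.map_smul, ℓ.map_smul,
      smul_eq_mul, smul_eq_mul, mul_comm, sub_self]

variable [FiniteDimensional ℂ V]

theorem exists_basis_forall_map_eq_zero (ℓ : V →L[ℝ] ℝ) :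
    ∃ b : Module.Basis (Fin (Module.finrank ℂ V)) ℂ V, ∀ j, ℓ (b j) = 0 := by
  choose c hc hℓ using fun j => exists_ne_zero_map_smul_eq_zero ℓ (Module.finBasis ℂ V j)
  exact ⟨(Module.finBasis ℂ V).isUnitSMul fun j => (hc j).isUnit, fun j => by
    rw [Module.Basis.isUnitSMul_apply, hℓ j]⟩

theorem exists_equiv_forall_map_ofRealPi_eq_zero (ℓ : V →L[ℝ] ℝ) :
    ∃ S : (Fin (Module.finrank ℂ V) → ℂ) ≃L[ℂ] V, ∀ x, ℓ (S (ofRealPi _ x)) = 0 := by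
  obtain ⟨b, hb⟩ := exists_basis_forall_map_eq_zero ℓ
  refine ⟨b.equivFunL.symm, fun x => ?_⟩
  have hsum : b.equivFunL.symm (ofRealPi _ x) = ∑ j, ofRealPi _ x j • b j :=
    b.equivFun_symm_apply _
  rw [hsum, map_sum]
  exact Finset.sum_eq_zero fun j _ => by
    rw [ofRealPi_apply, Complex.coe_smul, map_smul, hb j, smul_zero]

theorem exists_analyticAt_ofRealPi_zero_set {ρ : V → ℝ} {p : V} (hρ : AnalyticAt ℝ ρ p)
    (hρp : ρ p = 0) (hρ' : fderiv ℝ ρ p ≠ 0) :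
    ∃ G : (Fin (Module.finrank ℂ V) → ℂ) → V, AnalyticAt ℂ G 0 ∧ G 0 = p ∧ map G (𝓝 0) = 𝓝 p ∧
      ∀ᶠ x in 𝓝 0, ρ (G (ofRealPi _ x)) = 0 := by
  have : CompleteSpace V := FiniteDimensional.complete ℂ V
  obtain ⟨w, hw⟩ := DFunLike.ne_iff.mp hρ'
  obtain ⟨S, hS⟩ := exists_equiv_forall_map_ofRealPi_eq_zero (fderiv ℝ ρ p)
  set A : (Fin (Module.finrank ℂ V) → ℝ) × ℝ →L[ℝ] V :=
    ((S : _ →L[ℂ] V).restrictScalars ℝ ∘L ofRealPi _).coprod (.toSpanSingleton ℝ w) with hA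
  have hQ' : HasFDerivAt (fun y => ρ (p + A y)) (fderiv ℝ ρ p ∘L A) 0 := by
    refine HasFDerivAt.comp (0 : (Fin (Module.finrank ℂ V) → ℝ) × ℝ) ?_ (A.hasFDerivAt.const_add p)
    rw [map_zero, add_zero]
    exact hρ.differentiableAt.hasFDerivAt
  obtain ⟨F, hF, hF0, hF', hFρ⟩ := exists_analyticAt_implicit (Q := fun y => ρ (p + A y))
    (hρ.fun_comp_of_eq (analyticAt_const.add (A.analyticAt 0)) (by simp)) (by simp [hρp]) hQ'
    (by ext x; simp [hA, hS]) (by simpa [hA] using hw)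
  obtain ⟨g, hg, hgF⟩ := exists_analyticAt_eventually_ofRealPi_eq
    (((ofRealCLM.analyticAt _).comp hF : AnalyticAt ℝ (fun x => (F x : ℂ)) 0))
  have hg0 : g 0 = 0 := by simpa [hF0] using hgF.self_of_nhds
  have hg' := hasFDerivAt_zero_of_comp_ofRealPi hg.differentiableAt hgF
    (ofRealCLM.hasFDerivAt.comp 0 hF')
  have hG : AnalyticAt ℂ (fun z => p + (S z + g z • w)) 0 :=
    analyticAt_const.add ((S.analyticAt 0).add (hg.smul analyticAt_const))
  have hG0 : p + (S 0 + g 0 • w) = p := by simp [hg0]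
  have hG' : HasFDerivAt (fun z => p + (S z + g z • w)) (S : _ →L[ℂ] V) 0 := by
    simpa using (S.hasFDerivAt.add (hg'.smul_const w)).const_add p
  refine ⟨_, hG, hG0, ?_, ?_⟩
  · have hmap := (hG'.fderiv ▸ hG.hasStrictFDerivAt).map_nhds_eq_of_equiv
    rwa [hG0] at hmap
  · filter_upwards [hFρ, hgF] with x hx hgx
    rw [hgx, Function.comp_apply, ofRealCLM_apply, Complex.coe_smul]
    exact hx

theorem IsRealAnalyticHypersurface.exists_analyticAt_ofRealPi_mem {M : Set V}
    (hM : IsRealAnalyticHypersurface M) {p : V} (hp : p ∈ M) :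
    ∃ G : (Fin (Module.finrank ℂ V) → ℂ) → V, AnalyticAt ℂ G 0 ∧ G 0 = p ∧ map G (𝓝 0) = 𝓝 p ∧
      ∀ᶠ x in 𝓝 0, G (ofRealPi _ x) ∈ M := by
  obtain ⟨U, ρ, hU, hpU, hρ, hρ', hMU⟩ := hM.2 p hp
  have hρp : ρ p = 0 := (hMU ▸ ⟨hp, hpU⟩ : p ∈ {z ∈ U | ρ z = 0}).2
  obtain ⟨G, hG, hG0, hGmap, hGρ⟩ := exists_analyticAt_ofRealPi_zero_set (hρ p hpU) hρp hρ'
  refine ⟨G, hG, hG0, hGmap, ?_⟩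
  have htends : Tendsto (fun x => G (ofRealPi _ x)) (𝓝 0) (𝓝 p) :=
    Tendsto.comp (g := G) hGmap.le ((ofRealPi _).continuous.tendsto' _ _ (map_zero _))
  filter_upwards [hGρ, htends (hU.mem_nhds hpU)] with x hx hxU
  exact (hMU ▸ ⟨hxU, hx⟩ : G (ofRealPi _ x) ∈ M ∩ U).1

end Parametrization

section RealCurves

open scoped ContDiff

variable {E : Type*} [NormedAddCommGroup E] [NormedSpace ℂ E]

theorem hasTaylorAlong_of_contDiffAt {u : ℝ → E} (hu : ContDiffAt ℝ ∞ u 0) (hu0 : u 0 = 0) :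
    HasTaylorAlong (map ofReal (𝓝[≠] 0)) fun ζ => u ζ.re := fun q => by
  obtain ⟨s, hs, hus⟩ := (hu.of_le (mod_cast le_top : (q : WithTop ℕ∞) ≤ ∞)).contDiffOn
    le_rfl (by simp)
  obtain ⟨δ, hδ, hδs⟩ := Metric.mem_nhds_iff.mp hs
  have h0 : (0 : ℝ) ∈ ball 0 δ := mem_ball_self hδ
  have hT := taylor_isLittleO (convex_ball (0 : ℝ) δ) h0 (hus.mono hδs)
  rw [isOpen_ball.nhdsWithin_eq h0] at hT
  refine ⟨fun ζ => ∑ k ∈ Finset.range (q + 1),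
    ((k.factorial : ℂ)⁻¹ * ζ ^ k) • iteratedDerivWithin k u (ball 0 δ) 0, ?_, ?_, ?_⟩
  · exact Finset.analyticAt_fun_sum _ fun k _ =>
      (analyticAt_const.mul (analyticAt_id.pow k)).smul analyticAt_const
  · simp [Finset.sum_range_succ', hu0]
  · rw [Asymptotics.isBigO_map]
    refine ((hT.isBigO.mono nhdsWithin_le_nhds).congr_left fun x => ?_).trans
      (Asymptotics.isBigO_of_le _ fun x => ?_)
    · simp only [taylor_within_apply, sub_zero, Function.comp_apply, ofReal_re,
        ← ofReal_natCast, ← ofReal_inv, ← ofReal_pow, ← ofReal_mul, coe_smul]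
    · simp

theorem map_ofReal_nhdsNE_zero_le : map ofReal (𝓝[≠] 0) ≤ 𝓝[≠] (0 : ℂ) :=
  tendsto_nhdsWithin_of_tendsto_nhds_of_eventually_within _
    (continuous_ofReal.tendsto' _ _ ofReal_zero |>.mono_left nhdsWithin_le_nhds)
    (eventually_mem_nhdsWithin.mono fun _ hs => ofReal_ne_zero.mpr hs)

theorem eventually_exists_forall_eq_of_contDiffAt [FiniteDimensional ℂ E] {ι : Type*} {R : ℝ}
    (hR : 0 < R) {Θ : ι → E → ℂ} (hΘ : ∀ i, DifferentiableOn ℂ (Θ i) (ball 0 R)) {ψ : ι → ℂ → ℂ}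
    (hψ : ∀ᶠ ζ in 𝓝 0, ∀ i, DifferentiableAt ℂ (ψ i) ζ) {u : ℝ → E} (hu : ContDiffAt ℝ ∞ u 0)
    (hu0 : u 0 = 0) (h : ∀ᶠ s : ℝ in 𝓝 0, ∀ i, ψ i s = Θ i (u s)) :
    ∀ᶠ ζ in 𝓝 (0 : ℂ), ∃ y ∈ ball (0 : E) R, ∀ i, ψ i ζ = Θ i y := by
  obtain ⟨δ, hδ, hψ⟩ := Metric.eventually_nhds_iff_ball.mp hψ
  have hball {p : ℂ × E} (hp : p ∈ ball 0 (min δ R)) : p.1 ∈ ball 0 δ ∧ p.2 ∈ ball 0 R := by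
    simp only [mem_ball_zero_iff, Prod.norm_def, max_lt_iff, lt_min_iff] at hp ⊢
    exact ⟨hp.1.1, hp.2.2⟩
  have hdiff (i : ι) :
      DifferentiableOn ℂ (fun p : ℂ × E => ψ i p.1 - Θ i p.2) (ball 0 (min δ R)) := fun p hp =>
    have hψp := hψ p.1 (hball hp).1 i
    have hΘp := (hΘ i).differentiableAt (isOpen_ball.mem_nhds (hball hp).2)
    ((hψp.comp p differentiableAt_fst).sub
      (hΘp.comp p differentiableAt_snd)).differentiableWithinAt
  have hflat (i : ι) :
      FlatAlong (map ofReal (𝓝[≠] 0)) fun ζ => ψ i ζ - Θ i (u ζ.re) := fun q => by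
    rw [Asymptotics.isBigO_map]
    refine (Asymptotics.isBigO_zero _ _).congr' ?_ .rfl
    filter_upwards [nhdsWithin_le_nhds h] with s hs
    simp [hs i]
  filter_upwards [eventually_exists_forall_eq_zero map_ofReal_nhdsNE_zero_le (lt_min hδ hR) hdiff
    (hasTaylorAlong_of_contDiffAt hu hu0) hflat] with ζ ⟨y, hy, hζy⟩
  exact ⟨y, (hball hy).2, fun i => sub_eq_zero.mp (hζy i)⟩

theorem exists_ball_forall_norm_le_of_comp_ofRealPi [FiniteDimensional ℂ E] {κ : Type*}
    [Fintype κ] {ι : Type*} {R r : ℝ} (hR : 0 < R) (hr : 0 < r) {Θ : ι → E → ℂ} {B : ι → ℝ}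
    (hΘ : ∀ i, DifferentiableOn ℂ (Θ i) (ball 0 R)) (hB : ∀ i, ∀ y ∈ ball 0 R, ‖Θ i y‖ ≤ B i)
    {ψ : ι → (κ → ℂ) → ℂ} (hψ : ∀ i, DifferentiableOn ℂ (ψ i) (ball 0 r)) {v : (κ → ℝ) → E}
    (hv : ContDiffAt ℝ ∞ v 0) (hv0 : v 0 = 0)
    (h : ∀ᶠ x in 𝓝 0, ∀ i, ψ i (ofRealPi κ x) = Θ i (v x)) :
    ∃ ε > 0, ∀ i, ∀ z ∈ ball 0 ε, ‖ψ i z‖ ≤ B i := by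
  refine exists_ball_forall_norm_le hr hψ fun a => ?_
  have hline : Tendsto (fun s : ℝ => s • a) (𝓝 0) (𝓝 0) :=
    (continuous_id.smul continuous_const).tendsto' _ _ (zero_smul ℝ a)
  have hlineC : Tendsto (fun ζ : ℂ => ζ • ofRealPi κ a) (𝓝 0) (𝓝 0) :=
    (continuous_id.smul continuous_const).tendsto' _ _ (zero_smul ℂ _)
  have hψa : ∀ᶠ ζ in 𝓝 0, ∀ i, DifferentiableAt ℂ (fun ζ : ℂ => ψ i (ζ • ofRealPi κ a)) ζ := by
    filter_upwards [hlineC (ball_mem_nhds 0 hr)] with ζ hζ i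
    exact ((hψ i).differentiableAt (isOpen_ball.mem_nhds hζ)).comp ζ
      (differentiableAt_id.smul_const _)
  have hva : ContDiffAt ℝ ∞ (fun s : ℝ => v (s • a)) 0 :=
    ContDiffAt.comp 0 (by rwa [zero_smul]) (contDiffAt_id.smul contDiffAt_const)
  have hev : ∀ᶠ s : ℝ in 𝓝 0, ∀ i, ψ i ((s : ℂ) • ofRealPi κ a) = Θ i (v (s • a)) := by
    filter_upwards [hline.eventually h] with s hs i
    rw [ofReal_smul_ofRealPi, hs i]
  filter_upwards [eventually_exists_forall_eq_of_contDiffAt hR hΘ hψa hva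
    (by rw [zero_smul, hv0]) hev] with ζ ⟨y, hy, hζy⟩ i
  rw [hζy i]
  exact hB i y hy

end RealCurves

section CauchyEstimates

open scoped ContDiff

variable {V W : Type*} [NormedAddCommGroup V] [NormedSpace ℂ V] [NormedAddCommGroup W]
  [NormedSpace ℂ W] [FiniteDimensional ℂ W]

theorem contDiffWithinAt_of_forall_clm_comp {n : WithTop ℕ∞} {h : V → W} {s : Set V} {x : V}
    (H : ∀ ℓ : W →L[ℂ] ℂ, ContDiffWithinAt ℝ n (fun z => ℓ (h z)) s x) :
    ContDiffWithinAt ℝ n h s x := by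
  let e : W ≃L[ℂ] (Fin (Module.finrank ℂ W) → ℂ) := .ofFinrankEq (by simp)
  have he : ContDiffWithinAt ℝ n (fun z => e (h z)) s x :=
    contDiffWithinAt_pi.mpr fun i => H ((ContinuousLinearMap.proj i : (Fin _ → ℂ) →L[ℂ] ℂ) ∘L e)
  have hsymm : ContDiff ℝ n e.symm := e.symm.contDiff.restrict_scalars ℝ
  simpa [Function.comp_def] using hsymm.contDiffAt.comp_contDiffWithinAt x he

theorem IsCRMapOn.contDiffWithinAt {k : ℕ∞} {M : Set V} {M' : Set W} {h : V → W}
    (hh : IsCRMapOn k M M' h) {p : V} (hp : p ∈ M) : ContDiffWithinAt ℝ k h M p :=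
  contDiffWithinAt_of_forall_clm_comp fun ℓ => by
    obtain ⟨U, g, hU, hpU, hg, hgh, -⟩ := hh.2 ℓ p hp
    refine ((hg.contDiffAt (hU.mem_nhds hpU)).contDiffWithinAt (s := M)).congr_of_eventuallyEq
      ?_ (hgh p ⟨hp, hpU⟩).symm
    filter_upwards [self_mem_nhdsWithin, nhdsWithin_le_nhds (hU.mem_nhds hpU)] with z hzM hzU
    exact (hgh z ⟨hzM, hzU⟩).symm

theorem exists_pos_forall_div_pow_lt_pow_succ {C R : ℝ} (hC : 0 < C) (hR : 0 < R) :
    ∃ C₀ > 0, ∀ k : ℕ, C / R ^ k < C₀ ^ (k + 1) := by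
  refine ⟨C + R⁻¹ + 1, by positivity, fun k => ?_⟩
  have hRinv : 0 < R⁻¹ := by positivity
  calc C / R ^ k = R⁻¹ ^ k * C := by rw [inv_pow, mul_comm, div_eq_mul_inv]
    _ < (C + R⁻¹ + 1) ^ k * (C + R⁻¹ + 1) :=
      mul_lt_mul' (pow_le_pow_left₀ hRinv.le (by linarith) k) (by linarith) hC.le (by positivity)
    _ = (C + R⁻¹ + 1) ^ (k + 1) := (pow_succ _ k).symm

theorem cauchy_estimates_for_extended_components_general [FiniteDimensional ℂ V] {M : Set V}
    (hM : IsRealAnalyticHypersurface M) (h0M : 0 ∈ M) {h : V → W}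
    (hh : ContDiffWithinAt ℝ ∞ h M 0) (h00 : h 0 = 0) {ι : Type*} {R r₁ : ℝ} (hR : 0 < R)
    (hr₁ : 0 < r₁) {Θ : ι → W → ℂ} {B : ι → ℝ} (hΘ : ∀ i, DifferentiableOn ℂ (Θ i) (ball 0 R))
    (hB : ∀ i, ∀ y ∈ ball 0 R, ‖Θ i y‖ ≤ B i) {φ : ι → V → ℂ}
    (hφ : ∀ i, DifferentiableOn ℂ (φ i) (ball 0 r₁))
    (hφΘ : ∀ i, ∀ t ∈ M ∩ ball 0 r₁, φ i t = Θ i (h t)) :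
    ∃ r₀ > 0, ∀ i, ∀ t ∈ ball 0 r₀, ‖φ i t‖ ≤ B i := by
  obtain ⟨G, hG, hG0, hGmap, hGM⟩ := hM.exists_analyticAt_ofRealPi_mem h0M
  have hG₁ : ∀ᶠ z in 𝓝 0, G z ∈ ball 0 r₁ := hGmap.le (ball_mem_nhds 0 hr₁)
  obtain ⟨r₂, hr₂, hball⟩ := Metric.eventually_nhds_iff_ball.mp (hG.eventually_analyticAt.and hG₁)
  have hψ (i : ι) : DifferentiableOn ℂ (φ i ∘ G) (ball 0 r₂) := fun z hz =>
    (((hφ i).differentiableAt (isOpen_ball.mem_nhds (hball z hz).2)).comp z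
      (hball z hz).1.differentiableAt).differentiableWithinAt
  have hι : Tendsto (ofRealPi (Fin (Module.finrank ℂ V))) (𝓝 0) (𝓝 0) :=
    (ofRealPi _).continuous.tendsto' _ _ (map_zero _)
  have hv : ContDiffAt ℝ ∞ (fun x => h (G (ofRealPi _ x))) 0 := by
    have hGι : ContDiffAt ℝ ∞ (fun x => G (ofRealPi _ x)) 0 :=
      ContDiffAt.comp 0 (by simpa using hG.contDiffAt.restrict_scalars ℝ)
        (ofRealPi (Fin _)).contDiff.contDiffAt
    refine (ContDiffWithinAt.comp_of_preimage_mem_nhdsWithin (0 : Fin _ → ℝ) (s := univ) (t := M)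
      (by simpa [hG0] using hh) hGι.contDiffWithinAt ?_).contDiffAt univ_mem
    rw [nhdsWithin_univ]
    exact hGM
  have hev : ∀ᶠ x in 𝓝 0, ∀ i, (φ i ∘ G) (ofRealPi _ x) = Θ i (h (G (ofRealPi _ x))) := by
    filter_upwards [hGM, hι.eventually hG₁] with x hxM hx₁ i
    exact hφΘ i _ ⟨hxM, hx₁⟩
  obtain ⟨ε, hε, hbound⟩ := exists_ball_forall_norm_le_of_comp_ofRealPi hR hr₂ hΘ hB hψ hv
    (by simp [hG0, h00]) hev
  obtain ⟨r₀, hr₀, hsub⟩ := Metric.mem_nhds_iff.mp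
    (hGmap ▸ image_mem_map (ball_mem_nhds _ hε) : G '' ball 0 ε ∈ 𝓝 0)
  refine ⟨r₀, hr₀, fun i t ht => ?_⟩
  obtain ⟨z, hz, rfl⟩ := hsub ht
  exact hbound i z hz

end CauchyEstimates

/-!
STATEMENT 18 (Lemma 7.10). Let `Θ'_{w_{q'},x_{q'},β}(h(t))`, `β ∈ ℕ^{n-1}`, be
the components of a reflection function associated with a `C^∞` CR mapping `h`
(`h(0) = 0`, `0 ∈ M`) and a normally convergent defining series `d` for `M'`
(so `z̄' = Σ_β w̄'^β Θ'_β(t')`), and assume that each component extends as a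
holomorphic function `φ_β` in a neighborhood of `0` — hence the formal power
series `h_F` of `h` at `0` satisfies `Θ'_β(h_F(t)) ≡ φ_β(t)` for all `β`, and
the Artin approximation theorem produces a convergent `H` with
`Θ'_β(H(t)) ≡ φ_β(t)`.  Then there exist constants `C₀ > 0` and `r₀ > 0` such
that `|φ_β(t)| < C₀^{|β|+1}` for all `|t| < r₀` and all `β`.
-/
theorem cauchy_estimates_for_extended_components
    (m : ℕ) (hm : 1 ≤ m) (M M' : Set (CS m))
    (hM : IsRealAnalyticHypersurface M) (hM' : IsRealAnalyticHypersurface M')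
    (h : CS m → CS m) (hCR : IsCRMapOn (⊤ : ℕ∞) M M' h)
    (h0M : (0 : CS m) ∈ M) (h00 : h 0 = 0)
    (d : DefData m) (hd : d.IsDefiningSeriesOf M')
    (r₁ : ℝ) (hr₁ : 0 < r₁)
    (φ : (Fin m → ℕ) → CS m → ℂ)
    (hφhol : ∀ β, DifferentiableOn ℂ (φ β) (ball (0 : CS m) r₁))
    (hφeq : ∀ β, ∀ t ∈ M ∩ ball (0 : CS m) r₁, φ β t = d.Θ β (h t)) :
    ∃ C₀ r₀ : ℝ, 0 < C₀ ∧ 0 < r₀ ∧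
      ∀ β : Fin m → ℕ, ∀ t ∈ ball (0 : CS m) r₀,
        ‖φ β t‖ < C₀ ^ (mdeg β + 1) := by
  obtain ⟨hr, hC, hΘ, hB, -, -⟩ := hd
  have hR : 0 < 2 * d.r := by positivity
  obtain ⟨r₀, hr₀, hφB⟩ := cauchy_estimates_for_extended_components_general hM h0M
    (hCR.contDiffWithinAt h0M) h00 hR hr₁ hΘ hB hφhol hφeq
  obtain ⟨C₀, hC₀, hC₀B⟩ := exists_pos_forall_div_pow_lt_pow_succ hC hR
  exact ⟨C₀, r₀, hC₀, hr₀, fun β t ht => (hφB β t ht).trans_lt (hC₀B (mdeg β))⟩
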